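/- Let ℋ be an infinite-dimensional complex Hilbert space, let A ∈ B(ℋ), and let k be a positive integer. Then the relative interior of Ω_k(A) is contained in Λ_k(A), Λ_k(A) is contained in Ω_k(A), and Ω_k(A) equals the closure of Λ_k(A). In particular Λ_k(A) is nonempty and Ω_k(A) is its closure. -/

import Mathlib

noncomputable section

open scoped InnerProductSpace
open Complex

variable {H : Type*} [NormedAddCommGroup H] [InnerProductSpace ℂ H] [CompleteSpace H]

/-- `P` is an orthogonal projection: self-adjoint and idempotent. -/
def IsOrthProj (P : H →L[ℂ] H) : Prop :=
  IsSelfAdjoint P ∧ P ∘L P = P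

/-- The rank of a bounded operator, as a cardinal. -/
def opRank (F : H →L[ℂ] H) : Cardinal :=
  Module.rank ℂ (LinearMap.range (F : H →ₗ[ℂ] H))

/-- The rank-`k` numerical range `Λ_k(A)`. -/
def rankKRange (k : ℕ) (A : H →L[ℂ] H) : Set ℂ :=
  { lam | ∃ P : H →L[ℂ] H, IsOrthProj P ∧ opRank P = k ∧ P ∘L A ∘L P = lam • P }

/-- The classical numerical range `W(A)`. -/
def numRange (A : H →L[ℂ] H) : Set ℂ :=
  { z | ∃ x : H, ‖x‖ = 1 ∧ ⟪x, A x⟫_ℂ = z }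

/-- `λ_k(T)`: the supremum over `k`-dimensional compressions of the `k`-th largest
eigenvalue of the compression (Courant–Fischer form: sup over `k`-dimensional
subspaces of the infimum of the Rayleigh quotient). -/
def lambdaSA (k : ℕ) (T : H →L[ℂ] H) : ℝ :=
  sSup { t : ℝ | ∃ V : Submodule ℂ H, Module.finrank ℂ V = k ∧
    ∀ x ∈ V, ‖x‖ = 1 → t ≤ (⟪x, T x⟫_ℂ).re }

/-- The real part `(T + T*)/2` of an operator. -/
def reOp (T : H →L[ℂ] H) : H →L[ℂ] H :=
  (2 : ℂ)⁻¹ • (T + ContinuousLinearMap.adjoint T)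

/-- The set `Ω_k(A)`. -/
def omegaK (k : ℕ) (A : H →L[ℂ] H) : Set ℂ :=
  { μ | ∀ ξ ∈ Set.Ico (0 : ℝ) (2 * Real.pi),
      (Complex.exp (ξ * Complex.I) * μ).re ≤ lambdaSA k (reOp (Complex.exp (ξ * Complex.I) • A)) }

/-!
After a translation, the main point is that if `0` is a relative interior point of `Ω_k(B)`, then
some `k`-dimensional compression of `B` vanishes.

Suppose first that `Re (u • B)` is positive definite on some `k`-dimensional subspace for every
`u ≠ 0`. By compactness of the circle, these subspaces can be found in a single finite-dimensional
`M`. Mixing pairs of vectors outside `M` gives an orthonormal family on which the compression of `B`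
is a scalar `p`. Counting signs over a half-plane of values of `u` produces in `M` a `B`-diagonal
family of `k` vectors with entries in `-p ℝ≥0`, and adding to each of its vectors a multiple of one
outside `M` makes all entries vanish.

Otherwise, after a rotation, `Re B` has fewer than `k` positive squares. Then `Ω_k(B)` lies in a
half-plane with `0` on its boundary, hence on the boundary line. If `Ω_k(B) = {0}`, then `0` belongs
to the nonempty set `Λ_k(B)`. If not, `Re B` also has fewer than `k` negative squares, since
`Ω_k(B)` would otherwise contain points off the line. So the space splits into finite-dimensional
positive and negative parts of `Re B` and a neutral part `Z`. The pencils `Y + t Re B`,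
`Y = ± Re (i B)`, admit positive subspaces of dimension `k` that are constant for large `t` and for
large `-t`. Again one finite-dimensional `M` suffices, for all `u` off the real axis, and these are
the only ones needed because the correcting vectors can be taken in `Z`.
-/

open scoped Finset Topology

section Dimension

variable {K V W : Type*} [DivisionRing K] [AddCommGroup V] [Module K V] [AddCommGroup W]
  [Module K W]

theorem exists_le_finrank_eq {N : Submodule K V} {k : ℕ} (h : (k : Cardinal) ≤ Module.rank K N) :
    ∃ F ≤ N, Module.finrank K F = k := by
  obtain ⟨f, hf⟩ := exists_linearIndependent_of_le_rank h
  have hf' : LinearIndependent K (fun i => (f i : V)) := hf.map' N.subtype N.ker_subtype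
  refine ⟨Submodule.span K (Set.range fun i => (f i : V)), ?_, ?_⟩
  · rw [Submodule.span_le]
    rintro _ ⟨i, rfl⟩
    exact (f i).2
  · rw [finrank_span_eq_card hf', Fintype.card_fin]

theorem natCast_le_rank_of_not_finiteDimensional (h : ¬ FiniteDimensional K V) (k : ℕ) :
    (k : Cardinal) ≤ Module.rank K V :=
  Cardinal.natCast_lt_aleph0.le.trans (not_lt.1 fun hlt => h (Module.rank_lt_aleph0_iff.1 hlt))

theorem not_finiteDimensional_top (h : ¬ FiniteDimensional K V) :
    ¬ FiniteDimensional K (⊤ : Submodule K V) := fun htop =>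
  h (Module.finite_def.2 (Module.Finite.iff_fg.1 htop))

theorem ne_bot_of_not_finiteDimensional {N : Submodule K V} (h : ¬ FiniteDimensional K N) :
    N ≠ ⊥ := by
  rintro rfl
  exact h inferInstance

theorem not_finiteDimensional_inf_ker [FiniteDimensional K W] {N : Submodule K V}
    (hN : ¬ FiniteDimensional K N) (f : V →ₗ[K] W) :
    ¬ FiniteDimensional K (N ⊓ LinearMap.ker f : Submodule K V) := fun h =>
  hN <| Module.Finite.iff_fg.2 <| Submodule.fg_of_fg_map_of_fg_inf_ker f
    (IsNoetherian.noetherian _) (Module.Finite.iff_fg.1 h)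

theorem finrank_map_add_finrank_inf_ker (F : Submodule K V) [FiniteDimensional K F]
    (f : V →ₗ[K] W) :
    Module.finrank K (F.map f) + Module.finrank K (F ⊓ LinearMap.ker f : Submodule K V) =
      Module.finrank K F := by
  rw [← LinearMap.finrank_range_add_finrank_ker (f.domRestrict F), LinearMap.range_domRestrict,
    LinearMap.ker_domRestrict, ← Submodule.finrank_map_subtype_eq F (.comap F.subtype _),
    Submodule.map_comap_subtype]

theorem finrank_le_finrank_add_finrank_inf_ker [FiniteDimensional K W] (F : Submodule K V)
    [FiniteDimensional K F] (f : V →ₗ[K] W) :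
    Module.finrank K F ≤
      Module.finrank K W + Module.finrank K (F ⊓ LinearMap.ker f : Submodule K V) := by
  rw [← finrank_map_add_finrank_inf_ker F f]
  exact Nat.add_le_add_right (Submodule.finrank_le _) _

theorem inf_ne_bot_of_sup_eq_top {P S F : Submodule K V} [FiniteDimensional K P]
    [FiniteDimensional K F] (hPS : P ⊔ S = ⊤) (hlt : Module.finrank K P < Module.finrank K F) :
    F ⊓ S ≠ ⊥ := fun hbot => by
  have hmap : F.map S.mkQ ≤ P.map S.mkQ := by
    have htop := congrArg (Submodule.map S.mkQ) hPS
    rw [Submodule.map_sup, Submodule.mkQ_map_self, sup_bot_eq] at htop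
    exact htop ▸ Submodule.map_mono le_top
  have hF := finrank_map_add_finrank_inf_ker F S.mkQ
  rw [Submodule.ker_mkQ, hbot, finrank_bot, add_zero] at hF
  have := (Submodule.finrank_mono hmap).trans (Submodule.finrank_map_le S.mkQ P)
  omega

end Dimension

section PositiveSubspaces

variable {E : Type*} [NormedAddCommGroup E] [InnerProductSpace ℂ E] {S T : E →L[ℂ] E}
  {F M N : Submodule ℂ E} {k : ℕ} {c : ℝ}

/-- The form `x ↦ Re ⟪x, T x⟫` is positive definite on the subspace `F`. -/
def PosOn (T : E →L[ℂ] E) (F : Submodule ℂ E) : Prop :=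
  ∀ x ∈ F, x ≠ 0 → 0 < (⟪x, T x⟫_ℂ).re

/-- `M` has a subspace of dimension at least `k` on which `T` is positive definite. As `finrank`
vanishes on infinite-dimensional spaces, for `k ≥ 1` this subspace is finite-dimensional. -/
def HasPosSubspace (k : ℕ) (T : E →L[ℂ] E) (M : Submodule ℂ E) : Prop :=
  ∃ F ≤ M, k ≤ Module.finrank ℂ F ∧ PosOn T F

/-- Some compression of `Re T` to a subspace of dimension at least `k` is bounded below by `c`;
this says that `c` belongs to the set whose supremum is `λ_k(Re T)`. -/
def HasCompressionGE (k : ℕ) (T : E →L[ℂ] E) (c : ℝ) : Prop :=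
  ∃ F : Submodule ℂ E, k ≤ Module.finrank ℂ F ∧ ∀ x ∈ F, c * ‖x‖ ^ 2 ≤ (⟪x, T x⟫_ℂ).re

theorem HasPosSubspace.mono (h : HasPosSubspace k T M) (hMN : M ≤ N) : HasPosSubspace k T N :=
  let ⟨F, hF, hk, hpos⟩ := h
  ⟨F, hF.trans hMN, hk, hpos⟩

theorem HasCompressionGE.mono {d : ℝ} (h : HasCompressionGE k T c) (hdc : d ≤ c) :
    HasCompressionGE k T d :=
  let ⟨F, hk, hF⟩ := h
  ⟨F, hk, fun x hx => (mul_le_mul_of_nonneg_right hdc (sq_nonneg _)).trans (hF x hx)⟩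

theorem re_inner_real_smul_apply (T : E →L[ℂ] E) (r : ℝ) (x : E) :
    (⟪x, ((r : ℂ) • T) x⟫_ℂ).re = r * (⟪x, T x⟫_ℂ).re := by
  rw [smul_apply, inner_smul_right, Complex.re_ofReal_mul]

theorem PosOn.real_smul (h : PosOn T F) {r : ℝ} (hr : 0 < r) : PosOn ((r : ℂ) • T) F :=
  fun x hx hx0 => by
    rw [re_inner_real_smul_apply]
    exact mul_pos hr (h x hx hx0)

theorem HasPosSubspace.real_smul (h : HasPosSubspace k T M) {r : ℝ} (hr : 0 < r) :
    HasPosSubspace k ((r : ℂ) • T) M :=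
  let ⟨F, hF, hk, hpos⟩ := h
  ⟨F, hF, hk, hpos.real_smul hr⟩

theorem HasPosSubspace.of_div {u : ℂ} {r : ℝ} (hr : 0 < r)
    (h : HasPosSubspace k ((u / r) • T) M) : HasPosSubspace k (u • T) M := by
  simpa only [smul_smul, mul_div_cancel₀ u (Complex.ofReal_ne_zero.2 hr.ne')] using h.real_smul hr

theorem HasCompressionGE.real_smul (h : HasCompressionGE k T c) {r : ℝ} (hr : 0 ≤ r) :
    HasCompressionGE k ((r : ℂ) • T) (r * c) :=
  let ⟨F, hk, hF⟩ := h
  ⟨F, hk, fun x hx => by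
    rw [re_inner_real_smul_apply, mul_assoc]
    exact mul_le_mul_of_nonneg_left (hF x hx) hr⟩

theorem PosOn.of_lower_bound (hc : 0 < c) (h : ∀ x ∈ F, c * ‖x‖ ^ 2 ≤ (⟪x, T x⟫_ℂ).re) :
    PosOn T F := fun x hx hx0 =>
  (mul_pos hc (pow_pos (norm_pos_iff.2 hx0) 2)).trans_le (h x hx)

theorem HasCompressionGE.hasPosSubspace (h : HasCompressionGE k T c) (hc : 0 < c) :
    HasPosSubspace k T ⊤ :=
  let ⟨F, hk, hF⟩ := h
  ⟨F, le_top, hk, .of_lower_bound hc hF⟩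

theorem inner_smul_apply_smul_self (T : E →L[ℂ] E) (z : ℂ) (x : E) :
    ⟪z • x, T (z • x)⟫_ℂ = ((‖z‖ ^ 2 : ℝ) : ℂ) * ⟪x, T x⟫_ℂ := by
  rw [map_smul, inner_smul_left, inner_smul_right, ← mul_assoc, Complex.conj_mul']
  norm_cast

theorem lower_bound_of_norm_eq_one (h : ∀ x ∈ F, ‖x‖ = 1 → c ≤ (⟪x, T x⟫_ℂ).re) :
    ∀ x ∈ F, c * ‖x‖ ^ 2 ≤ (⟪x, T x⟫_ℂ).re := fun x hx => by
  rcases eq_or_ne x 0 with rfl | hx0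
  · simp
  have hnorm : ‖x‖ ≠ 0 := norm_ne_zero_iff.2 hx0
  have hunit := h (((‖x‖⁻¹ : ℝ) : ℂ) • x) (F.smul_mem _ hx) (by
    rw [norm_smul, Complex.norm_real, norm_inv, norm_norm, inv_mul_cancel₀ hnorm])
  rw [inner_smul_apply_smul_self, Complex.re_ofReal_mul, Complex.norm_real, norm_inv,
    norm_norm, inv_pow, inv_mul_eq_div] at hunit
  exact (le_div_iff₀ (by positivity)).1 hunit

theorem PosOn.exists_lower_bound [FiniteDimensional ℂ F] (h : PosOn T F) :
    ∃ c > 0, ∀ x ∈ F, c * ‖x‖ ^ 2 ≤ (⟪x, T x⟫_ℂ).re := by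
  have : ProperSpace F := FiniteDimensional.proper ℂ F
  obtain ⟨c, hc, hle⟩ := (isCompact_sphere (0 : F) 1).exists_forall_le'
    (f := fun x : F => (⟪(x : E), T x⟫_ℂ).re) (by fun_prop) (a := 0)
    fun x hx => h x x.2 (by simpa using ne_zero_of_mem_unit_sphere ⟨x, hx⟩)
  exact ⟨c, hc, lower_bound_of_norm_eq_one fun x hx hx1 => hle ⟨x, hx⟩ (by simpa using hx1)⟩

theorem abs_re_inner_apply_le (T : E →L[ℂ] E) (x y : E) :
    |(⟪x, T y⟫_ℂ).re| ≤ ‖T‖ * (‖x‖ * ‖y‖) :=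
  calc |(⟪x, T y⟫_ℂ).re| ≤ ‖x‖ * ‖T y‖ :=
        (Complex.abs_re_le_norm _).trans (norm_inner_le_norm _ _)
    _ ≤ ‖x‖ * (‖T‖ * ‖y‖) := by gcongr; exact T.le_opNorm y
    _ = ‖T‖ * (‖x‖ * ‖y‖) := by ring

theorem lower_bound_of_norm_sub_le {r : ℝ} (h : ∀ x ∈ F, c * ‖x‖ ^ 2 ≤ (⟪x, T x⟫_ℂ).re)
    (hST : ‖S - T‖ ≤ r) : ∀ x ∈ F, (c - r) * ‖x‖ ^ 2 ≤ (⟪x, S x⟫_ℂ).re := fun x hx => by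
  have hdiff := (abs_le.1 (abs_re_inner_apply_le (S - T) x x)).1
  rw [sub_apply, inner_sub_right, Complex.sub_re, ← sq] at hdiff
  have := mul_le_mul_of_nonneg_right hST (sq_nonneg ‖x‖)
  linarith [h x hx]

/-- `M` has a subspace of dimension at least `k` on which `Re ⟪x, T x⟫ ≥ c ‖x‖²`, for every
operator `T` in the set `K`. -/
def UniformCompressionGE (k : ℕ) (K : Set (E →L[ℂ] E)) (M : Submodule ℂ E) (c : ℝ) : Prop :=
  ∀ T ∈ K, ∃ F ≤ M, k ≤ Module.finrank ℂ F ∧ ∀ x ∈ F, c * ‖x‖ ^ 2 ≤ (⟪x, T x⟫_ℂ).re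

theorem UniformCompressionGE.mono {K : Set (E →L[ℂ] E)} {d : ℝ}
    (h : UniformCompressionGE k K M c) (hMN : M ≤ N) (hdc : d ≤ c) :
    UniformCompressionGE k K N d := fun T hT =>
  let ⟨F, hF, hk, hb⟩ := h T hT
  ⟨F, hF.trans hMN, hk, fun x hx =>
    (mul_le_mul_of_nonneg_right hdc (sq_nonneg _)).trans (hb x hx)⟩

theorem exists_uniformCompressionGE_of_isCompact {K : Set (E →L[ℂ] E)} (hK : IsCompact K)
    (hk : 1 ≤ k) (h : ∀ T ∈ K, HasPosSubspace k T ⊤) :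
    ∃ c > 0, ∃ M : Submodule ℂ E, FiniteDimensional ℂ M ∧ UniformCompressionGE k K M c := by
  refine hK.induction_on (p := fun K => ∃ c > 0, ∃ M : Submodule ℂ E, FiniteDimensional ℂ M ∧
    UniformCompressionGE k K M c) ?_ ?_ ?_ ?_
  · exact ⟨1, one_pos, ⊥, inferInstance, fun T hT => hT.elim⟩
  · rintro K L hKL ⟨c, hc, M, hM, hL⟩
    exact ⟨c, hc, M, hM, fun T hT => hL T (hKL hT)⟩
  · rintro K L ⟨c, hc, M, hM, hK⟩ ⟨d, hd, N, hN, hL⟩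
    refine ⟨min c d, lt_min hc hd, M ⊔ N, inferInstance, fun T hT => ?_⟩
    rcases hT with hT | hT
    · exact hK.mono le_sup_left (min_le_left _ _) T hT
    · exact hL.mono le_sup_right (min_le_right _ _) T hT
  · intro T hT
    obtain ⟨F, -, hF, hpos⟩ := h T hT
    have : FiniteDimensional ℂ F := Module.finite_of_finrank_pos (by omega)
    obtain ⟨c, hc, hle⟩ := hpos.exists_lower_bound
    refine ⟨_, mem_nhdsWithin_of_mem_nhds (Metric.closedBall_mem_nhds T (half_pos hc)),
      c / 2, half_pos hc, F, inferInstance, fun S hS => ⟨F, le_rfl, hF, fun x hx => ?_⟩⟩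
    have := lower_bound_of_norm_sub_le hle (mem_closedBall_iff_norm.1 hS) x hx
    rwa [sub_half] at this

end PositiveSubspaces

section Weights

variable {ι : Type*} [Fintype ι] {k : ℕ}

/- The condition `x i < τ * y i` places the slope `x i / y i` below `τ` if `0 < y i` and above `τ`
if `y i < 0`. Take for `j` the smallest slope of the first kind, and for `l` the next larger slope
of the second kind. -/
theorem exists_adjacent_slopes (x y : ι → ℝ) (hcard : ∀ τ : ℝ, k + 1 ≤ #{i | x i < τ * y i})
    (hy : ∀ i, y i = 0 → 0 ≤ x i) :
    ∃ j l, 0 < y j ∧ y l < 0 ∧ x j / y j < x l / y l ∧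
      ∀ τ, x j < τ * y j → x l < τ * y l → k + 2 ≤ #{i | x i < τ * y i} := by
  have hne : ∀ τ, ({i | x i < τ * y i} : Finset ι).Nonempty := fun τ =>
    Finset.card_pos.1 ((Nat.succ_pos k).trans_le (hcard τ))
  have hupper : ({i | 0 < y i} : Finset ι).Nonempty := by
    obtain ⟨τ, hτ⟩ := (Set.finite_range fun i => x i / y i).bddAbove
    obtain ⟨i, hi⟩ := hne τ
    have hi : x i < τ * y i := by simpa using hi
    refine ⟨i, Finset.mem_filter.2 ⟨Finset.mem_univ i, ?_⟩⟩
    rcases lt_trichotomy (y i) 0 with hneg | hzero | hpos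
    · exact absurd ((lt_div_iff_of_neg hneg).2 hi) (not_lt.2 (hτ ⟨i, rfl⟩))
    · exact absurd (hy i hzero) (by simpa [hzero] using hi)
    · exact hpos
  obtain ⟨j, hj, hjmin⟩ := Finset.exists_min_image _ (fun i => x i / y i) hupper
  have hj : 0 < y j := by simpa using hj
  have hlower : ∀ i, x i < x j / y j * y i → y i < 0 ∧ x j / y j < x i / y i := by
    intro i hi
    rcases lt_trichotomy (y i) 0 with hneg | hzero | hpos
    · exact ⟨hneg, (lt_div_iff_of_neg hneg).2 hi⟩
    · exact absurd (hy i hzero) (by simpa [hzero] using hi)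
    · exact absurd ((div_lt_iff₀ hpos).2 hi) (not_lt.2 (hjmin i (by simpa using hpos)))
  obtain ⟨l, hl, hlmin⟩ := Finset.exists_min_image _ (fun i => x i / y i) (hne (x j / y j))
  obtain ⟨hly, hjl⟩ := hlower l (by simpa using hl)
  refine ⟨j, l, hj, hly, hjl, fun τ hτj hτl => ?_⟩
  have hnot : j ∉ ({i | x i < x j / y j * y i} : Finset ι) := by
    simp [div_mul_cancel₀ _ hj.ne']
  calc k + 2 ≤ #(Finset.cons j _ hnot) := by
        rw [Finset.card_cons]; exact Nat.succ_le_succ (hcard _)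
    _ ≤ #{i | x i < τ * y i} := Finset.card_le_card ?_
  refine Finset.cons_subset.2 ⟨by simpa using hτj, fun i hi => ?_⟩
  have hτi := ((lt_div_iff_of_neg hly).2 hτl).trans_le (hlmin i hi)
  simpa using (lt_div_iff_of_neg (hlower i (by simpa using hi)).1).1 hτi

theorem le_card_filter_notMem_pair [DecidableEq ι] {p : ι → Prop} [DecidablePred p] {j l : ι}
    (h : k + 1 ≤ #{i | p i}) (hjl : j ≠ l → p j → p l → k + 2 ≤ #{i | p i}) :
    k ≤ #{i | i ∉ ({j, l} : Finset ι) ∧ p i} := by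
  have herase : ({i | i ∉ ({j, l} : Finset ι) ∧ p i} : Finset ι) =
      (({i | p i} : Finset ι).erase j).erase l := by
    ext i
    simp only [Finset.mem_filter, Finset.mem_erase, Finset.mem_insert, Finset.mem_singleton,
      Finset.mem_univ]
    tauto
  have hle := Finset.pred_card_le_card_erase (s := ({i | p i} : Finset ι)) (a := j)
  rw [herase]
  by_cases hl : j ≠ l ∧ p l
  · have hle' := Finset.pred_card_le_card_erase (s := ({i | p i} : Finset ι).erase j) (a := l)
    by_cases hj : p j
    · have := hjl hl.1 hj hl.2
      omega
    · rw [Finset.erase_eq_of_notMem (a := j) (by simp [hj])] at hle' ⊢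
      omega
  · rw [Finset.erase_eq_of_notMem (a := l) (by grind)]
    omega

theorem exists_real_weights (x y : ι → ℝ) (hcard : ∀ τ : ℝ, k + 1 ≤ #{i | x i < τ * y i}) :
    ∃ w : ι → ℝ, 0 < w ∧ ∑ i, w i * y i = 0 ∧ ∑ i, w i * x i ≤ 0 ∧
      ∀ τ : ℝ, k ≤ #{i | w i = 0 ∧ x i < τ * y i} := by
  classical
  have hremove : ∀ (w : ι → ℝ) (j l : ι), (∀ i, i ∉ ({j, l} : Finset ι) → w i = 0) →
      (∀ τ, j ≠ l → x j < τ * y j → x l < τ * y l → k + 2 ≤ #{i | x i < τ * y i}) →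
      ∀ τ : ℝ, k ≤ #{i | w i = 0 ∧ x i < τ * y i} := fun w j l hw hjl τ =>
    (le_card_filter_notMem_pair (hcard τ) (hjl τ)).trans <|
      Finset.card_le_card <| Finset.monotone_filter_right _ fun i _ hi => ⟨hw i hi.1, hi.2⟩
  by_cases hy : ∀ i, y i = 0 → 0 ≤ x i
  · obtain ⟨j, l, hj, hl, hslope, hjl⟩ := exists_adjacent_slopes x y hcard hy
    refine ⟨Pi.single j (y j)⁻¹ + Pi.single l (-(y l)⁻¹), ?_, ?_, ?_,
      hremove _ j l (fun i hi => ?_) fun τ _ => hjl τ⟩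
    · have hl' : 0 < -(y l)⁻¹ := neg_pos.2 (inv_lt_zero.2 hl)
      exact add_pos (Pi.single_pos.2 (inv_pos.2 hj)) (Pi.single_pos.2 hl')
    · simp [add_mul, Finset.sum_add_distrib, Pi.single_apply, hj.ne', hl.ne]
    · simp only [Pi.add_apply, Pi.single_apply, add_mul, ite_mul, zero_mul, neg_mul,
        Finset.sum_add_distrib, Finset.sum_ite_eq', Finset.mem_univ, if_true]
      rw [inv_mul_eq_div, inv_mul_eq_div]
      linarith
    · simp only [Finset.mem_insert, Finset.mem_singleton, not_or] at hi
      simp [hi.1, hi.2]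
  · push Not at hy
    obtain ⟨j, hjy, hjx⟩ := hy
    refine ⟨Pi.single j 1, Pi.single_pos.2 one_pos, by simp [Pi.single_apply, hjy],
      by simpa [Pi.single_apply] using hjx.le,
      hremove _ j j (fun i hi => ?_) fun τ h => absurd rfl h⟩
    simpa [Pi.single_apply] using hi

theorem exists_weights {d : ι → ℂ} (hcard : ∀ u : ℂ, u.re < 0 → k + 1 ≤ #{i | 0 < (u * d i).re}) :
    ∃ w : ι → ℝ, 0 < w ∧ (∃ r : ℝ, 0 ≤ r ∧ ∑ i, (w i : ℂ) * d i = -(r : ℂ)) ∧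
      ∀ u : ℂ, u.re < 0 → k ≤ #{i | w i = 0 ∧ 0 < (u * d i).re} := by
  have hslope : ∀ u z : ℂ, u.re < 0 → (0 < (u * z).re ↔ z.re < u.im / u.re * z.im) := by
    intro u z hu
    rw [Complex.mul_re, div_mul_eq_mul_div, lt_div_iff_of_neg hu, sub_pos, mul_comm z.re]
  obtain ⟨w, hw, hsumy, hsumx, hcard'⟩ := exists_real_weights (fun i => (d i).re)
    (fun i => (d i).im) fun τ => by
      simpa [hslope] using hcard (-1 - τ * I) (by simp)
  refine ⟨w, hw, ⟨-∑ i, w i * (d i).re, neg_nonneg.2 hsumx, ?_⟩, fun u hu => ?_⟩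
  · apply Complex.ext <;> simp [hsumy]
  · simpa only [hslope u _ hu] using hcard' (u.im / u.re)

end Weights

section DiagonalFamilies

variable {E : Type*} [NormedAddCommGroup E] [InnerProductSpace ℂ E] {T : E →L[ℂ] E}
  {F M P Q : Submodule ℂ E}

/-- The right orthogonal complement of `P` for the sesquilinear form `⟪x, T y⟫`. -/
def formOrthogonal (T : E →L[ℂ] E) (P : Submodule ℂ E) : Submodule ℂ E :=
  Pᗮ.comap T.toLinearMap

theorem mem_formOrthogonal {y : E} : y ∈ formOrthogonal T P ↔ ∀ x ∈ P, ⟪x, T y⟫_ℂ = 0 :=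
  Submodule.mem_orthogonal P (T y)

theorem mem_formOrthogonal_span_singleton {x y : E} :
    y ∈ formOrthogonal T (ℂ ∙ x) ↔ ⟪x, T y⟫_ℂ = 0 :=
  Submodule.mem_orthogonal_singleton_iff_inner_right

theorem ker_orthogonalProjectionOnto_comp [FiniteDimensional ℂ P] :
    LinearMap.ker (P.orthogonalProjectionOnto.toLinearMap ∘ₗ T.toLinearMap) =
      formOrthogonal T P := by
  ext y
  simp [formOrthogonal]

theorem sup_inf_formOrthogonal [FiniteDimensional ℂ P] (hPM : P ≤ M)
    (hP : P ⊓ formOrthogonal T P = ⊥) : P ⊔ M ⊓ formOrthogonal T P = M := by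
  rw [← ker_orthogonalProjectionOnto_comp] at hP ⊢
  set f : E →ₗ[ℂ] P := P.orthogonalProjectionOnto.toLinearMap ∘ₗ T.toLinearMap
  have hsurj : Function.Surjective (f ∘ₗ P.subtype) := by
    refine LinearMap.surjective_of_injective (LinearMap.ker_eq_bot.1 ?_)
    rw [LinearMap.ker_comp, ← Submodule.disjoint_iff_comap_eq_bot, disjoint_iff, hP]
  refine le_antisymm (sup_le hPM inf_le_left) fun x hx => ?_
  obtain ⟨p, hp⟩ := hsurj (f x)
  refine Submodule.mem_sup.2 ⟨p, p.2, x - p, ⟨M.sub_mem hx (hPM p.2), ?_⟩, by abel⟩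
  rw [SetLike.mem_coe, LinearMap.mem_ker, map_sub, sub_eq_zero]
  exact hp.symm

theorem not_finiteDimensional_inf_formOrthogonal (hM : ¬ FiniteDimensional ℂ M) (T : E →L[ℂ] E)
    (P : Submodule ℂ E) [FiniteDimensional ℂ P] :
    ¬ FiniteDimensional ℂ (M ⊓ formOrthogonal T P : Submodule ℂ E) := by
  rw [← ker_orthogonalProjectionOnto_comp]
  exact not_finiteDimensional_inf_ker hM _

theorem not_finiteDimensional_inf_orthogonal (hM : ¬ FiniteDimensional ℂ M) (P : Submodule ℂ E)
    [FiniteDimensional ℂ P] : ¬ FiniteDimensional ℂ (M ⊓ Pᗮ : Submodule ℂ E) :=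
  not_finiteDimensional_inf_formOrthogonal hM (.id ℂ E) P

variable {ι : Type*} {e : ι → E}

/-- The matrix of the sesquilinear form `⟪x, T y⟫` in the family `e` is diagonal. -/
def IsDiagonalFamily (T : E →L[ℂ] E) (e : ι → E) : Prop :=
  Pairwise fun i j => ⟪e i, T (e j)⟫_ℂ = 0

theorem IsDiagonalFamily.smul (h : IsDiagonalFamily T e) (u : ℂ) :
    IsDiagonalFamily (u • T) e := fun i j hij => by
  simp only [smul_apply, inner_smul_right, h hij, mul_zero]

theorem IsDiagonalFamily.comp (h : IsDiagonalFamily T e) {κ : Type*} {f : κ → ι}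
    (hf : Function.Injective f) : IsDiagonalFamily T (e ∘ f) :=
  fun _ _ hij => h (hf.ne hij)

theorem IsDiagonalFamily.inner_apply_sum [Fintype ι] (h : IsDiagonalFamily T e) (c : ι → ℂ)
    (i : ι) : ⟪e i, T (∑ j, c j • e j)⟫_ℂ = c i * ⟪e i, T (e i)⟫_ℂ := by
  rw [map_sum, inner_sum, Fintype.sum_eq_single i, map_smul, inner_smul_right]
  intro j hj
  rw [map_smul, inner_smul_right, h hj.symm, mul_zero]

theorem IsDiagonalFamily.inner_sum_apply [Fintype ι] (h : IsDiagonalFamily T e) (c : ι → ℂ)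
    (i : ι) : ⟪∑ j, c j • e j, T (e i)⟫_ℂ = starRingEnd ℂ (c i) * ⟪e i, T (e i)⟫_ℂ := by
  rw [sum_inner, Fintype.sum_eq_single i, inner_smul_left]
  intro j hj
  rw [inner_smul_left, h hj, mul_zero]

theorem IsDiagonalFamily.inner_sum_apply_sum [Fintype ι] (h : IsDiagonalFamily T e) (c : ι → ℂ) :
    ⟪∑ i, c i • e i, T (∑ i, c i • e i)⟫_ℂ =
      ∑ i, ((‖c i‖ ^ 2 : ℝ) : ℂ) * ⟪e i, T (e i)⟫_ℂ := by
  rw [sum_inner]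
  refine Finset.sum_congr rfl fun i _ => ?_
  rw [inner_smul_left, h.inner_apply_sum, ← mul_assoc, Complex.conj_mul']
  norm_cast

theorem IsDiagonalFamily.linearIndependent [Finite ι] (h : IsDiagonalFamily T e)
    (hne : ∀ i, ⟪e i, T (e i)⟫_ℂ ≠ 0) : LinearIndependent ℂ e := by
  cases nonempty_fintype ι
  refine Fintype.linearIndependent_iff.2 fun c hc i => ?_
  have := h.inner_apply_sum c i
  rw [hc, map_zero, inner_zero_right] at this
  exact (mul_eq_zero.1 this.symm).resolve_right (hne i)

theorem IsDiagonalFamily.posOn_span [Finite ι] (h : IsDiagonalFamily T e)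
    (hpos : ∀ i, 0 < (⟪e i, T (e i)⟫_ℂ).re) : PosOn T (Submodule.span ℂ (Set.range e)) := by
  cases nonempty_fintype ι
  intro x hx hx0
  obtain ⟨c, rfl⟩ := (Submodule.mem_span_range_iff_exists_fun ℂ).1 hx
  obtain ⟨i, -, hi⟩ := Finset.exists_ne_zero_of_sum_ne_zero hx0
  simp only [h.inner_sum_apply_sum, Complex.re_sum, Complex.re_ofReal_mul]
  refine Finset.sum_pos' (fun j _ => mul_nonneg (sq_nonneg _) (hpos j).le)
    ⟨i, Finset.mem_univ i, mul_pos (pow_pos (norm_pos_iff.2 ?_) 2) (hpos i)⟩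
  exact fun hci => hi (by rw [hci, zero_smul])

theorem IsDiagonalFamily.finrank_le_card_pos [Fintype ι] (h : IsDiagonalFamily T e)
    (hF : F ≤ Submodule.span ℂ (Set.range e)) (hpos : PosOn T F) :
    Module.finrank ℂ F ≤ #{i | 0 < (⟪e i, T (e i)⟫_ℂ).re} := by
  have := FiniteDimensional.span_of_finite ℂ (Set.finite_range e)
  have : FiniteDimensional ℂ F := Submodule.finiteDimensional_of_le hF
  let f : E →ₗ[ℂ] ({i // 0 < (⟪e i, T (e i)⟫_ℂ).re} → ℂ) :=
    LinearMap.pi fun i => (innerSL ℂ (e i)).toLinearMap ∘ₗ T.toLinearMap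
  have hbot : F ⊓ LinearMap.ker f = ⊥ := (Submodule.eq_bot_iff _).2 fun x ⟨hxF, hx⟩ => by
    by_contra hx0
    obtain ⟨c, rfl⟩ := (Submodule.mem_span_range_iff_exists_fun ℂ).1 (hF hxF)
    refine (hpos _ hxF hx0).not_ge ?_
    simp only [h.inner_sum_apply_sum, Complex.re_sum, Complex.re_ofReal_mul]
    refine Finset.sum_nonpos fun i _ => ?_
    rcases le_or_gt (⟪e i, T (e i)⟫_ℂ).re 0 with hi | hi
    · exact mul_nonpos_of_nonneg_of_nonpos (sq_nonneg _) hi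
    · have hci : c i * ⟪e i, T (e i)⟫_ℂ = 0 :=
        (h.inner_apply_sum c i).symm.trans (congrFun hx ⟨i, hi⟩)
      have hdi : ⟪e i, T (e i)⟫_ℂ ≠ 0 := fun h0 => by simp [h0] at hi
      simp [(mul_eq_zero.1 hci).resolve_right hdi]
  have := finrank_le_finrank_add_finrank_inf_ker F f
  rwa [hbot, finrank_bot, add_zero, Module.finrank_fintype_fun_eq_card,
    Fintype.card_subtype] at this

end DiagonalFamilies

section PencilEigenvectors

variable {E : Type*} [NormedAddCommGroup E] [InnerProductSpace ℂ E] {B : E →L[ℂ] E}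
  {M : Submodule ℂ E} {x y : E}

/-- An eigenvector of the pencil formed by the compression of `B` to `M` and its adjoint: a nonzero
`x ∈ M` for which the functionals `⟪·, B x⟫` and `⟪B ·, x⟫` on `M` are proportional. This is encoded
by asking that they both vanish on the kernel of a single functional `φ`. -/
def IsPencilEigenvector (B : E →L[ℂ] E) (M : Submodule ℂ E) (x : E) : Prop :=
  x ∈ M ∧ x ≠ 0 ∧ ∃ φ : E →ₗ[ℂ] ℂ, ∀ y ∈ M, φ y = 0 → ⟪y, B x⟫_ℂ = 0 ∧ ⟪x, B y⟫_ℂ = 0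

theorem exists_ne_zero_inner_apply_eq_zero [FiniteDimensional ℂ E] [Nontrivial E] (T : E →ₗ[ℂ] E) :
    ∃ x : E, x ≠ 0 ∧ ∃ w : E, ∀ y, ⟪w, y⟫_ℂ = 0 → ⟪y, T x⟫_ℂ = 0 ∧ ⟪x, T y⟫_ℂ = 0 := by
  by_cases hT : Function.Injective T
  · let e := LinearEquiv.ofInjectiveEndo T hT
    obtain ⟨c, hc⟩ := Module.End.exists_eigenvalue (e.symm.toLinearMap ∘ₗ LinearMap.adjoint T)
    obtain ⟨x, hx⟩ := hc.exists_hasEigenvector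
    have hadj : LinearMap.adjoint T x = c • T x :=
      (LinearEquiv.symm_apply_eq e).1 hx.apply_eq_smul |>.trans (map_smul T c x)
    refine ⟨x, hx.2, T x, fun y hy => ⟨inner_eq_zero_symm.1 hy, ?_⟩⟩
    rw [← LinearMap.adjoint_inner_left, hadj, inner_smul_left, hy, mul_zero]
  · obtain ⟨x, hx, hx0⟩ := (LinearMap.ker T).ne_bot_iff.1 (mt LinearMap.ker_eq_bot.1 hT)
    refine ⟨x, hx0, LinearMap.adjoint T x, fun y hy => ⟨?_, ?_⟩⟩
    · rw [LinearMap.mem_ker.1 hx, inner_zero_right]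
    · rwa [← LinearMap.adjoint_inner_left]

theorem exists_isPencilEigenvector [FiniteDimensional ℂ M] (hM : M ≠ ⊥) :
    ∃ x, IsPencilEigenvector B M x := by
  have : Nontrivial M := Submodule.nontrivial_iff_ne_bot.2 hM
  let T : M →ₗ[ℂ] M := M.orthogonalProjectionOnto.toLinearMap ∘ₗ B.toLinearMap ∘ₗ M.subtype
  have hT : ∀ x y : M, ⟪x, T y⟫_ℂ = ⟪(x : E), B y⟫_ℂ := fun x y => by simp [T]
  obtain ⟨x, hx, w, hw⟩ := exists_ne_zero_inner_apply_eq_zero T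
  refine ⟨x, x.2, by simpa using hx, (innerSL ℂ (w : E)).toLinearMap, fun y hy hφ => ?_⟩
  have := hw ⟨y, hy⟩ hφ
  rwa [hT, hT] at this

theorem IsPencilEigenvector.inner_apply_eq_zero (hx : IsPencilEigenvector B M x)
    (hxx : ⟪x, B x⟫_ℂ ≠ 0) (hy : y ∈ M) (hxy : ⟪x, B y⟫_ℂ = 0) : ⟪y, B x⟫_ℂ = 0 := by
  obtain ⟨hxM, -, φ, hφ⟩ := hx
  have hφx : φ x ≠ 0 := fun h => hxx (hφ x hxM h).1
  obtain ⟨hyx, hxy'⟩ := hφ (y - (φ y / φ x) • x) (M.sub_mem hy (M.smul_mem _ hxM)) (by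
    rw [map_sub, map_smul, smul_eq_mul, div_mul_cancel₀ _ hφx, sub_self])
  have hc : φ y / φ x = 0 := by
    simpa [inner_sub_right, inner_smul_right, hxy, hxx] using hxy'
  simpa [hc] using hyx

theorem IsPencilEigenvector.of_inf_formOrthogonal (hx : IsPencilEigenvector B M x)
    (hxx : ⟪x, B x⟫_ℂ ≠ 0) (hy : IsPencilEigenvector B (M ⊓ formOrthogonal B (ℂ ∙ x)) y) :
    IsPencilEigenvector B M y := by
  obtain ⟨⟨hyM, hxy⟩, hy0, ψ, hψ⟩ := hy
  rw [SetLike.mem_coe, mem_formOrthogonal_span_singleton] at hxy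
  have hyx := hx.inner_apply_eq_zero hxx hyM hxy
  refine ⟨hyM, hy0, ψ - (ψ x / ⟪x, B x⟫_ℂ) • ((innerSL ℂ x).toLinearMap ∘ₗ B.toLinearMap),
    fun z hz hz0 => ?_⟩
  have hproj := hψ (z - (⟪x, B z⟫_ℂ / ⟪x, B x⟫_ℂ) • x)
    ⟨M.sub_mem hz (M.smul_mem _ hx.1), mem_formOrthogonal_span_singleton.2 (by
      rw [map_sub, map_smul, inner_sub_right, inner_smul_right, div_mul_cancel₀ _ hxx, sub_self])⟩
    (by
      rw [map_sub, map_smul, smul_eq_mul, div_mul_eq_mul_div, mul_comm, ← div_mul_eq_mul_div]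
      exact hz0)
  simpa [inner_sub_left, inner_sub_right, inner_smul_left, inner_smul_right, hxy, hyx] using hproj

theorem exists_isDiagonalFamily_span_eq [FiniteDimensional ℂ M]
    (h : ∀ x, IsPencilEigenvector B M x → ⟪x, B x⟫_ℂ ≠ 0) :
    ∃ (n : ℕ) (e : Fin n → E), IsDiagonalFamily B e ∧ (∀ i, ⟪e i, B (e i)⟫_ℂ ≠ 0) ∧
      Submodule.span ℂ (Set.range e) = M := by
  induction hn : Module.finrank ℂ M using Nat.strong_induction_on generalizing M with
  | _ n ih =>
  rcases eq_or_ne M ⊥ with rfl | hM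
  · exact ⟨0, Fin.elim0, fun i => i.elim0, fun i => i.elim0, by simp⟩
  obtain ⟨x, hx⟩ := exists_isPencilEigenvector (B := B) hM
  have hxx := h x hx
  set N := M ⊓ formOrthogonal B (ℂ ∙ x)
  have hN : ∀ {y}, y ∈ N → y ∈ M ∧ ⟪x, B y⟫_ℂ = 0 := fun hy =>
    ⟨hy.1, mem_formOrthogonal_span_singleton.1 hy.2⟩
  have hNM : N < M := inf_le_left.lt_of_ne fun heq => hxx (hN (heq.symm.le hx.1)).2
  have : FiniteDimensional ℂ N := Submodule.finiteDimensional_of_le hNM.le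
  have hsup : (ℂ ∙ x) ⊔ N = M :=
    sup_inf_formOrthogonal ((Submodule.span_singleton_le_iff_mem _ _).2 hx.1) <|
      (Submodule.eq_bot_iff _).2 fun y ⟨hy, hxy⟩ => by
        obtain ⟨c, rfl⟩ := Submodule.mem_span_singleton.1 hy
        have hc : c * ⟪x, B x⟫_ℂ = 0 := by
          simpa using mem_formOrthogonal_span_singleton.1 hxy
        rw [(mul_eq_zero.1 hc).resolve_right hxx, zero_smul]
  obtain ⟨m, e, hdiag, hne, hspan⟩ := ih _ (hn ▸ Submodule.finrank_lt_finrank_of_lt hNM)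
    (fun y hy => h y (hx.of_inf_formOrthogonal hxx hy)) rfl
  have heN : ∀ i, e i ∈ N := fun i => hspan.le (Submodule.subset_span ⟨i, rfl⟩)
  refine ⟨m + 1, Fin.cons x e, ?_, Fin.cases hxx hne, ?_⟩
  · refine Fin.cases (Fin.cases (fun h => absurd rfl h) fun j _ => (hN (heN j)).2) fun i =>
      Fin.cases (fun _ => hx.inner_apply_eq_zero hxx (hN (heN i)).1 (hN (heN i)).2)
        fun j hij => hdiag fun h => hij (congrArg Fin.succ h)
  · rw [Fin.range_cons, Submodule.span_insert, hspan, hsup]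

end PencilEigenvectors

section NonposSplittings

variable {E : Type*} [NormedAddCommGroup E] [InnerProductSpace ℂ E] {B : E →L[ℂ] E}
  {M : Submodule ℂ E} {k : ℕ}

/-- One step of the construction of a `B`-diagonal family with nonpositive real entries: a vector
`v ∈ M` with `⟪v, B v⟫ ≤ 0`, and a subspace `N ≤ M` not containing `v`, orthogonal to `v` for the
form of `B` on both sides, on which the rotations `u • B` with `Re u < 0` all keep `k` positive
dimensions. -/
def HasNonposSplitting (k : ℕ) (B : E →L[ℂ] E) (M : Submodule ℂ E) : Prop :=
  ∃ v ∈ M, ∃ N ≤ M, v ∉ N ∧ (∀ y ∈ N, ⟪v, B y⟫_ℂ = 0 ∧ ⟪y, B v⟫_ℂ = 0) ∧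
    (∃ r : ℝ, 0 ≤ r ∧ ⟪v, B v⟫_ℂ = -(r : ℂ)) ∧ ∀ u : ℂ, u.re < 0 → HasPosSubspace k (u • B) N

theorem PosOn.map {T : E →L[ℂ] E} {F : Submodule ℂ E} (h : PosOn T F) {f : E →ₗ[ℂ] E}
    (hf : ∀ x ∈ F, ⟪f x, T (f x)⟫_ℂ = ⟪x, T x⟫_ℂ) : PosOn T (F.map f) := by
  rintro _ ⟨x, hx, rfl⟩ hx0
  rw [hf x hx]
  exact h x hx fun h0 => hx0 (by rw [h0, map_zero])

theorem PosOn.finrank_map {T : E →L[ℂ] E} {F : Submodule ℂ E} [FiniteDimensional ℂ F]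
    (h : PosOn T F) {f : E →ₗ[ℂ] E} (hf : ∀ x ∈ F, ⟪f x, T (f x)⟫_ℂ = ⟪x, T x⟫_ℂ) :
    Module.finrank ℂ (F.map f) = Module.finrank ℂ F := by
  have hker : F ⊓ LinearMap.ker f = ⊥ := (Submodule.eq_bot_iff _).2 fun x ⟨hx, hfx⟩ => by
    by_contra hx0
    have := h x hx hx0
    rw [← hf x hx, LinearMap.mem_ker.1 hfx, inner_zero_left] at this
    exact this.ne rfl
  rw [← finrank_map_add_finrank_inf_ker F f, hker, finrank_bot, add_zero]

theorem hasNonposSplitting_of_isotropic {x : E} (hx : IsPencilEigenvector B M x)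
    (hxx : ⟪x, B x⟫_ℂ = 0) (h : ∀ u : ℂ, u.re < 0 → HasPosSubspace (k + 1) (u • B) M) :
    HasNonposSplitting k B M := by
  obtain ⟨hxM, hx0, φ, hφ⟩ := hx
  refine ⟨x, hxM, M ⊓ formOrthogonal B (ℂ ∙ x) ⊓ (ℂ ∙ B x)ᗮ ⊓ (ℂ ∙ x)ᗮ,
    inf_le_left.trans (inf_le_left.trans inf_le_left), fun h => ?_, fun y hy => ?_,
    ⟨0, le_rfl, by simpa using hxx⟩, fun u hu => ?_⟩
  · exact hx0 (inner_self_eq_zero.1 (Submodule.mem_orthogonal_singleton_iff_inner_right.1 h.2))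
  · exact ⟨mem_formOrthogonal_span_singleton.1 hy.1.1.2,
      Submodule.mem_orthogonal_singleton_iff_inner_left.1 hy.1.2⟩
  obtain ⟨F, hFM, hF, hpos⟩ := h u hu
  have : FiniteDimensional ℂ F := Module.finite_of_finrank_pos (by omega)
  let p : E →ₗ[ℂ] E := (ℂ ∙ x)ᗮ.starProjection
  have hp : ∀ y, ∃ c : ℂ, p y = y - c • x := fun y => by
    obtain ⟨c, hc⟩ := Submodule.mem_span_singleton.1 ((ℂ ∙ x).starProjection_apply_mem y)
    exact ⟨c, by simp [p, Submodule.starProjection_orthogonal_val, hc]⟩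
  have hform : ∀ y ∈ F ⊓ LinearMap.ker φ, ⟪p y, (u • B) (p y)⟫_ℂ = ⟪y, (u • B) y⟫_ℂ := by
    rintro y ⟨hyF, hyφ⟩
    obtain ⟨c, hc⟩ := hp y
    obtain ⟨hyx, hxy⟩ := hφ y (hFM hyF) hyφ
    simp [hc, hyx, hxy, hxx]
  have hpos' : PosOn (u • B) (F ⊓ LinearMap.ker φ) := fun y hy => hpos y hy.1
  refine ⟨(F ⊓ LinearMap.ker φ).map p, ?_, ?_, hpos'.map hform⟩
  · rintro _ ⟨y, ⟨hyF, hyφ⟩, rfl⟩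
    obtain ⟨c, hc⟩ := hp y
    obtain ⟨hyx, hxy⟩ := hφ y (hFM hyF) hyφ
    refine ⟨⟨⟨?_, mem_formOrthogonal_span_singleton.2 ?_⟩,
      Submodule.mem_orthogonal_singleton_iff_inner_left.2 ?_⟩,
      Submodule.starProjection_apply_mem _ y⟩
    · rw [hc]
      exact M.sub_mem (hFM hyF) (M.smul_mem _ hxM)
    · simp [hc, hxy, hxx]
    · simp [hc, inner_sub_left, inner_smul_left, hyx, hxx]
  · have := finrank_le_finrank_add_finrank_inf_ker F φ
    rw [hpos'.finrank_map hform]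
    rw [Module.finrank_self] at this
    omega

theorem IsDiagonalFamily.hasPosSubspace_span_image {ι : Type*} [Fintype ι] {T : E →L[ℂ] E}
    {e : ι → E} (h : IsDiagonalFamily T e) {p : ι → Prop} [DecidablePred p]
    (hk : k ≤ #{i | p i ∧ 0 < (⟪e i, T (e i)⟫_ℂ).re}) :
    HasPosSubspace k T (Submodule.span ℂ (e '' {i | p i})) := by
  let f : {i // p i ∧ 0 < (⟪e i, T (e i)⟫_ℂ).re} → ι := Subtype.val
  have hf : IsDiagonalFamily T (e ∘ f) := h.comp Subtype.val_injective
  refine ⟨Submodule.span ℂ (Set.range (e ∘ f)), Submodule.span_mono ?_, ?_,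
    hf.posOn_span fun i => i.2.2⟩
  · rintro _ ⟨i, rfl⟩
    exact ⟨i, i.2.1, rfl⟩
  · have hne : ∀ i, ⟪(e ∘ f) i, T ((e ∘ f) i)⟫_ℂ ≠ 0 := fun i h0 =>
      i.2.2.ne' (congrArg Complex.re h0)
    rwa [finrank_span_eq_card (hf.linearIndependent hne), Fintype.card_subtype]

theorem IsDiagonalFamily.hasNonposSplitting {ι : Type*} [Finite ι] {e : ι → E}
    (hdiag : IsDiagonalFamily B e) (hne : ∀ i, ⟪e i, B (e i)⟫_ℂ ≠ 0)
    (h : ∀ u : ℂ, u.re < 0 →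
      HasPosSubspace (k + 1) (u • B) (Submodule.span ℂ (Set.range e))) :
    HasNonposSplitting k B (Submodule.span ℂ (Set.range e)) := by
  cases nonempty_fintype ι
  obtain ⟨w, hw, ⟨r, hr, hsum⟩, hcard⟩ := exists_weights (d := fun i => ⟪e i, B (e i)⟫_ℂ) (k := k)
    fun u hu => by
      obtain ⟨F, hF, hk, hpos⟩ := h u hu
      simpa [inner_smul_right] using hk.trans ((hdiag.smul u).finrank_le_card_pos hF hpos)
  let c : ι → ℂ := fun i => (√(w i) : ℂ)
  have hc : ∀ i, c i = 0 ↔ w i = 0 := fun i => by simp [c, Real.sqrt_eq_zero (hw.le i)]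
  have hiv := hdiag.inner_apply_sum c
  have hvi := hdiag.inner_sum_apply c
  have hvv := hdiag.inner_sum_apply_sum c
  set v := ∑ i, c i • e i
  set N := Submodule.span ℂ (e '' {i | w i = 0})
  have hN : ∀ {L : Submodule ℂ E}, (∀ i, w i = 0 → e i ∈ L) → ∀ y ∈ N, y ∈ L := fun hL =>
    Submodule.span_le.2 (Set.image_subset_iff.2 hL)
  refine ⟨v, Submodule.sum_mem _ fun i _ => Submodule.smul_mem _ _ (Submodule.subset_span ⟨i, rfl⟩),
    N, Submodule.span_mono (Set.image_subset_range _ _), fun hv => ?_, fun y hy => ⟨?_, ?_⟩,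
    ⟨r, hr, ?_⟩, fun u hu => ?_⟩
  · obtain ⟨-, j, hj⟩ := Pi.lt_def.1 hw
    have hej : v ∈ formOrthogonal B (ℂ ∙ e j) := hN (fun i hi =>
      mem_formOrthogonal_span_singleton.2 <| hdiag fun hji =>
        hj.ne' ((congrArg w hji).trans hi)) v hv
    rw [mem_formOrthogonal_span_singleton, hiv] at hej
    exact hj.ne' ((hc j).1 ((mul_eq_zero.1 hej).resolve_right (hne j)))
  · exact mem_formOrthogonal_span_singleton.1 (hN (fun i hi =>
      mem_formOrthogonal_span_singleton.2 (by rw [hvi, (hc i).2 hi, map_zero, zero_mul])) y hy)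
  · exact Submodule.mem_orthogonal_singleton_iff_inner_left.1 (hN (fun i hi =>
      Submodule.mem_orthogonal_singleton_iff_inner_left.2
        (by rw [hiv, (hc i).2 hi, zero_mul])) y hy)
  · simp only [hvv, c, Complex.norm_real, Real.norm_eq_abs, sq_abs, Real.sq_sqrt (hw.le _), hsum]
  · refine (hdiag.smul u).hasPosSubspace_span_image ?_
    simpa [inner_smul_right] using hcard u hu

theorem exists_hasNonposSplitting [FiniteDimensional ℂ M]
    (h : ∀ u : ℂ, u.re < 0 → HasPosSubspace (k + 1) (u • B) M) : HasNonposSplitting k B M := by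
  by_cases hiso : ∀ x, IsPencilEigenvector B M x → ⟪x, B x⟫_ℂ ≠ 0
  · obtain ⟨n, e, hdiag, hne, rfl⟩ := exists_isDiagonalFamily_span_eq hiso
    exact hdiag.hasNonposSplitting hne h
  · push Not at hiso
    obtain ⟨x, hx, hxx⟩ := hiso
    exact hasNonposSplitting_of_isotropic hx hxx h

theorem exists_isDiagonalFamily_nonpos [FiniteDimensional ℂ M]
    (h : ∀ u : ℂ, u.re < 0 → HasPosSubspace k (u • B) M) :
    ∃ w : Fin k → E, LinearIndependent ℂ w ∧ (∀ i, w i ∈ M) ∧ IsDiagonalFamily B w ∧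
      ∀ i, ∃ r : ℝ, 0 ≤ r ∧ ⟪w i, B (w i)⟫_ℂ = -(r : ℂ) := by
  induction k generalizing M with
  | zero => exact ⟨Fin.elim0, linearIndependent_empty_type, fun i => i.elim0, fun i => i.elim0,
      fun i => i.elim0⟩
  | succ k ih =>
    obtain ⟨v, hv, N, hNM, hvN, horth, hvv, hN⟩ := exists_hasNonposSplitting h
    have : FiniteDimensional ℂ N := Submodule.finiteDimensional_of_le hNM
    obtain ⟨w, hw, hwN, hdiag, hww⟩ := ih hN
    refine ⟨Fin.cons v w, linearIndependent_finCons.2 ⟨hw, fun h => hvN ?_⟩,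
      Fin.cases hv fun i => hNM (hwN i), ?_, Fin.cases hvv hww⟩
    · exact Submodule.span_le.2 (Set.range_subset_iff.2 hwN) h
    · exact Fin.cases (Fin.cases (fun h => absurd rfl h) fun j _ => (horth _ (hwN j)).1) fun i =>
        Fin.cases (fun _ => (horth _ (hwN i)).2) fun j hij => hdiag fun h => hij (congrArg _ h)

end NonposSplittings

section OrthonormalDiagonalFamilies

variable {E ι κ : Type*} [NormedAddCommGroup E] [InnerProductSpace ℂ E] {T : E →L[ℂ] E}
  {N : Submodule ℂ E} {k : ℕ}

/-- An orthonormal family of vectors of `N` in which the compression of `T` is diagonal. -/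
structure IsOrthonormalDiagonal (T : E →L[ℂ] E) (N : Submodule ℂ E) (e : ι → E) : Prop where
  orthonormal : Orthonormal ℂ e
  mem : ∀ i, e i ∈ N
  diagonal : IsDiagonalFamily T e

theorem exists_isOrthonormalDiagonal (hN : ¬ FiniteDimensional ℂ N) (T : E →L[ℂ] E) (n : ℕ) :
    ∃ e : Fin n → E, IsOrthonormalDiagonal T N e := by
  induction n with
  | zero => exact ⟨Fin.elim0, ⟨fun i => i.elim0, fun i => i.elim0⟩, fun i => i.elim0,
      fun i => i.elim0⟩
  | succ n ih =>
    obtain ⟨e, he, heN, hdiag⟩ := ih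
    let P := Submodule.span ℂ (Set.range e)
    let Q := Submodule.span ℂ (Set.range (T ∘ e))
    have : FiniteDimensional ℂ P := FiniteDimensional.span_of_finite ℂ (Set.finite_range _)
    have : FiniteDimensional ℂ Q := FiniteDimensional.span_of_finite ℂ (Set.finite_range _)
    have hpool := not_finiteDimensional_inf_orthogonal
      (not_finiteDimensional_inf_formOrthogonal hN T P) (P ⊔ Q)
    obtain ⟨y, hy, hy0⟩ := (Submodule.ne_bot_iff _).1 (ne_bot_of_not_finiteDimensional hpool)
    let x := ((‖y‖⁻¹ : ℝ) : ℂ) • y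
    obtain ⟨⟨hxN, hxT⟩, hxPQ⟩ := Submodule.smul_mem _ ((‖y‖⁻¹ : ℝ) : ℂ) hy
    have hxT : ∀ i, ⟪e i, T x⟫_ℂ = 0 := fun i =>
      mem_formOrthogonal.1 hxT _ (Submodule.subset_span (Set.mem_range_self i))
    have hxP : ∀ i, ⟪e i, x⟫_ℂ = 0 := fun i =>
      Submodule.inner_right_of_mem_orthogonal
        (Submodule.mem_sup_left (Submodule.subset_span (Set.mem_range_self i))) hxPQ
    have hxQ : ∀ i, ⟪T (e i), x⟫_ℂ = 0 := fun i =>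
      Submodule.inner_right_of_mem_orthogonal
        (Submodule.mem_sup_right (Submodule.subset_span (Set.mem_range_self i))) hxPQ
    refine ⟨Fin.cons x e, orthonormal_vecCons_iff.2 ⟨?_, fun i =>
      inner_eq_zero_symm.1 (hxP i), he⟩, Fin.cases hxN heN, ?_⟩
    · simp [x, norm_smul, hy0]
    · exact Fin.cases (Fin.cases (fun h => absurd rfl h) fun j _ => inner_eq_zero_symm.1 (hxQ j))
        fun i => Fin.cases (fun _ => hxT i) fun j hij => hdiag fun h => hij (congrArg _ h)

theorem IsOrthonormalDiagonal.exists_mix {e : κ ⊕ κ → E} (h : IsOrthonormalDiagonal T N e)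
    {s t : κ → ℝ} (hs : ∀ i, 0 ≤ s i) (ht : ∀ i, 0 ≤ t i) (hst : ∀ i, s i + t i = 1) :
    ∃ f : κ → E, IsOrthonormalDiagonal T N f ∧ ∀ i, ⟪f i, T (f i)⟫_ℂ =
      s i • ⟪e (.inl i), T (e (.inl i))⟫_ℂ + t i • ⟪e (.inr i), T (e (.inr i))⟫_ℂ := by
  let f : κ → E := fun i => (√(s i) : ℂ) • e (.inl i) + (√(t i) : ℂ) • e (.inr i)
  have hoff : ∀ {S : E →L[ℂ] E}, IsDiagonalFamily S e → IsDiagonalFamily S f :=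
    fun hS i j hij => by
      simp [f, hS (Sum.inl_injective.ne hij), hS (Sum.inr_injective.ne hij), hS Sum.inl_ne_inr,
        hS Sum.inr_ne_inl]
  have hon : ∀ {S : E →L[ℂ] E}, IsDiagonalFamily S e → ∀ i, ⟪f i, S (f i)⟫_ℂ =
      s i • ⟪e (.inl i), S (e (.inl i))⟫_ℂ + t i • ⟪e (.inr i), S (e (.inr i))⟫_ℂ :=
    fun hS i => by
      simp [f, hS Sum.inl_ne_inr, hS Sum.inr_ne_inl,
        ← mul_assoc, ← Complex.ofReal_mul, Real.mul_self_sqrt, hs, ht]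
  have hid : IsDiagonalFamily (.id ℂ E) e := h.orthonormal.2
  refine ⟨f, ⟨⟨fun i => ?_, hoff hid⟩, fun i => ?_, hoff h.diagonal⟩, hon h.diagonal⟩
  · have hii := hon hid i
    simp only [ContinuousLinearMap.id_apply, inner_self_eq_norm_sq_to_K, h.orthonormal.1,
      ← add_smul, hst, one_smul, one_pow, RCLike.ofReal_one] at hii
    exact (pow_eq_one_iff_of_nonneg (norm_nonneg _) two_ne_zero).1 (Complex.ofReal_injective
      (by simpa using hii))
  · exact N.add_mem (N.smul_mem _ (h.mem _)) (N.smul_mem _ (h.mem _))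

theorem exists_equiv_le_const_le (a : Fin (k + k) → ℝ) :
    ∃ (σ : Fin k ⊕ Fin k ≃ Fin (k + k)) (c : ℝ), ∀ i, a (σ (.inl i)) ≤ c ∧ c ≤ a (σ (.inr i)) := by
  rcases k with - | k
  · exact ⟨finSumFinEquiv, 0, fun i => i.elim0⟩
  have hmono := Tuple.monotone_sort a
  refine ⟨finSumFinEquiv.trans (Tuple.sort a), a (Tuple.sort a (Fin.natAdd (k + 1) 0)),
    fun i => ⟨hmono ?_, hmono ?_⟩⟩
  · exact Fin.le_def.2 (by simp)
  · exact Fin.le_def.2 (by simp)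

theorem IsOrthonormalDiagonal.exists_map_const {e : Fin (k + k) → E}
    (h : IsOrthonormalDiagonal T N e) (L : ℂ →ₗ[ℝ] ℝ) :
    ∃ f : Fin k → E, IsOrthonormalDiagonal T N f ∧ (∃ c, ∀ i, L ⟪f i, T (f i)⟫_ℂ = c) ∧
      ∀ i, ⟪f i, T (f i)⟫_ℂ ∈ convexHull ℝ (Set.range fun j => ⟪e j, T (e j)⟫_ℂ) := by
  obtain ⟨σ, c, hc⟩ := exists_equiv_le_const_le fun i => L ⟪e i, T (e i)⟫_ℂ
  have hσ : IsOrthonormalDiagonal T N (e ∘ σ) :=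
    ⟨h.orthonormal.comp σ σ.injective, fun i => h.mem _, h.diagonal.comp σ.injective⟩
  choose s t hs ht hst hcombo using fun i =>
    (segment_eq_Icc ((hc i).1.trans (hc i).2)).ge (Set.mem_Icc.2 (hc i))
  obtain ⟨f, hf, hft⟩ := hσ.exists_mix hs ht hst
  refine ⟨f, hf, ⟨c, fun i => ?_⟩, fun i => ?_⟩
  · rw [hft, map_add, map_smul, map_smul]
    exact hcombo i
  · rw [hft]
    exact convex_convexHull ℝ _ (subset_convexHull ℝ _ (Set.mem_range_self _))
      (subset_convexHull ℝ _ (Set.mem_range_self _)) (hs i) (ht i) (hst i)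

theorem exists_isOrthonormalDiagonal_const (hN : ¬ FiniteDimensional ℂ N) (T : E →L[ℂ] E) (k : ℕ) :
    ∃ (v : Fin k → E) (p : ℂ), IsOrthonormalDiagonal T N v ∧ ∀ i, ⟪v i, T (v i)⟫_ℂ = p := by
  obtain ⟨e, he⟩ := exists_isOrthonormalDiagonal hN T (k + k + (k + k))
  obtain ⟨f, hf, ⟨a, ha⟩, -⟩ := he.exists_map_const Complex.reLm
  obtain ⟨v, hv, ⟨b, hb⟩, hconv⟩ := hf.exists_map_const Complex.imLm
  refine ⟨v, ⟨a, b⟩, hv, fun i => Complex.ext ?_ (hb i)⟩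
  exact convexHull_min (Set.range_subset_iff.2 ha)
    (convex_hyperplane Complex.reLm.isLinear a) (hconv i)

end OrthonormalDiagonalFamilies

section IsotropicFamilies

variable {E : Type*} [NormedAddCommGroup E] [InnerProductSpace ℂ E] {B : E →L[ℂ] E}
  {M N : Submodule ℂ E} {k : ℕ}

/-- The compression of `T` to some `k`-dimensional subspace vanishes: in the notation of the
statement, `0 ∈ Λ_k(T)`. -/
def HasZeroCompression (k : ℕ) (T : E →L[ℂ] E) : Prop :=
  ∃ z : Fin k → E, LinearIndependent ℂ z ∧ ∀ i j, ⟪z i, T (z j)⟫_ℂ = 0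

theorem HasZeroCompression.of_smul {u : ℂ} (hu : u ≠ 0) (h : HasZeroCompression k (u • B)) :
    HasZeroCompression k B :=
  let ⟨z, hz, hzB⟩ := h
  ⟨z, hz, fun i j => (mul_eq_zero.1 ((inner_smul_right ..).symm.trans (hzB i j))).resolve_left hu⟩

theorem inner_add_smul_apply_add_smul {w w' v v' : E} (hwv : ⟪w, B v'⟫_ℂ = 0)
    (hvw : ⟪v, B w'⟫_ℂ = 0) (a b : ℝ) :
    ⟪w + (a : ℂ) • v, B (w' + (b : ℂ) • v')⟫_ℂ = ⟪w, B w'⟫_ℂ + a * b * ⟪v, B v'⟫_ℂ := by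
  simp only [map_add, map_smul, inner_add_left, inner_add_right, inner_smul_left, inner_smul_right,
    hwv, hvw, Complex.conj_ofReal]
  ring

theorem linearIndependent_add_of_mem_orthogonal [M.HasOrthogonalProjection] {ι : Type*}
    {w v : ι → E} (hw : LinearIndependent ℂ w) (hwM : ∀ i, w i ∈ M) (hv : ∀ i, v i ∈ Mᗮ) :
    LinearIndependent ℂ (w + v) := by
  refine .of_comp M.starProjection.toLinearMap ?_
  convert hw using 1
  ext1 i
  simp [Submodule.starProjection_eq_self_iff.2 (hwM i),
    M.starProjection_apply_eq_zero_iff.2 (hv i)]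

/- A nonpositive diagonal family in `M` is made isotropic by adding multiples of an orthonormal
family outside `M` on which `B` is a scalar `p` of opposite phase. -/
theorem hasZeroCompression_of_forall_hasPosSubspace [FiniteDimensional ℂ M]
    (hN : ¬ FiniteDimensional ℂ N)
    (h : ∀ u : ℂ, (∃ x ∈ N, (⟪x, (u • B) x⟫_ℂ).re < 0) → HasPosSubspace k (u • B) M) :
    HasZeroCompression k B := by
  rcases k.eq_zero_or_pos with rfl | hk
  · exact ⟨Fin.elim0, linearIndependent_empty_type, fun i => i.elim0⟩
  obtain ⟨v, p, ⟨hv, hvN, hvB⟩, hvp⟩ := exists_isOrthonormalDiagonal_const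
    (not_finiteDimensional_inf_orthogonal (not_finiteDimensional_inf_formOrthogonal hN B M)
      (M ⊔ M.map B.toLinearMap)) B k
  rcases eq_or_ne p 0 with rfl | hp
  · exact ⟨v, hv.linearIndependent, fun i j => (eq_or_ne i j).elim (fun hij => hij ▸ hvp i) (hvB ·)⟩
  have hconj : starRingEnd ℂ p ≠ 0 := (map_ne_zero _).2 hp
  obtain ⟨w, hw, hwM, hwB, hww⟩ := exists_isDiagonalFamily_nonpos (k := k) (M := M)
    (B := starRingEnd ℂ p • B) fun u hu => by
      rw [smul_smul]
      refine h _ ⟨v ⟨0, hk⟩, (hvN _).1.1, ?_⟩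
      rw [smul_apply, inner_smul_right, hvp, mul_assoc, Complex.conj_mul', ← Complex.ofReal_pow,
        Complex.re_mul_ofReal]
      exact mul_neg_of_neg_of_pos hu (pow_pos (norm_pos_iff.2 hp) 2)
  choose r hr hwr using hww
  have hvM : ∀ i, v i ∈ Mᗮ := fun i => Submodule.orthogonal_le le_sup_left (hvN i).2
  have hvBw : ∀ i j, ⟪v i, B (w j)⟫_ℂ = 0 := fun i j => Submodule.inner_left_of_mem_orthogonal
    (Submodule.mem_sup_right (Submodule.mem_map_of_mem (hwM j))) (hvN i).2
  have hwBv : ∀ i j, ⟪w i, B (v j)⟫_ℂ = 0 := fun i j =>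
    mem_formOrthogonal.1 (hvN j).1.2 _ (hwM i)
  let s : Fin k → ℝ := fun i => √(r i) / ‖p‖
  refine ⟨w + fun i => (s i : ℂ) • v i, linearIndependent_add_of_mem_orthogonal hw hwM
    fun i => Mᗮ.smul_mem _ (hvM i), fun i j => mul_left_cancel₀ hconj ?_⟩
  simp only [Pi.add_apply]
  rw [inner_add_smul_apply_add_smul (hwBv i j) (hvBw i j), mul_add, mul_zero, ← inner_smul_right,
    ← smul_apply]
  rcases eq_or_ne i j with rfl | hij
  · have hs : s i * s i * ‖p‖ ^ 2 = r i := by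
      rw [← Real.sq_sqrt (hr i), ← div_mul_cancel₀ (√(r i)) (norm_ne_zero_iff.2 hp)]
      ring
    rw [hwr, hvp, mul_left_comm, Complex.conj_mul', ← hs]
    push_cast
    ring
  · rw [hwB hij, hvB hij, mul_zero, mul_zero, add_zero]

/- By compactness of the unit circle, a single finite-dimensional subspace serves all `u`. -/
theorem hasZeroCompression_of_forall_ne_zero (hE : ¬ FiniteDimensional ℂ E) (hk : 1 ≤ k)
    (h : ∀ u : ℂ, u ≠ 0 → HasPosSubspace k (u • B) ⊤) : HasZeroCompression k B := by
  have hcpt : IsCompact ((fun u : ℂ => u • B) '' Metric.sphere 0 1) :=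
    (isCompact_sphere 0 1).image (by fun_prop)
  obtain ⟨c, hc, M, hM, hMc⟩ := exists_uniformCompressionGE_of_isCompact hcpt hk (by
    rintro _ ⟨u, hu, rfl⟩
    exact h u (ne_zero_of_mem_unit_sphere ⟨u, hu⟩))
  refine hasZeroCompression_of_forall_hasPosSubspace (M := M) (N := ⊤)
    (not_finiteDimensional_top hE) fun u ⟨x, _, hx⟩ => ?_
  have hu : u ≠ 0 := by
    rintro rfl
    simp at hx
  obtain ⟨F, hFM, hkF, hF⟩ := hMc _ ⟨u / ‖u‖, by simp [hu], rfl⟩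
  exact .of_div (norm_pos_iff.2 hu) ⟨F, hFM, hkF, .of_lower_bound hc hF⟩

end IsotropicFamilies

section InertiaSplittings

variable {E : Type*} [NormedAddCommGroup E] [InnerProductSpace ℂ E] {G T Y : E →L[ℂ] E}
  {M N P Q Z : Submodule ℂ E} {k : ℕ} {c : ℝ}

theorem re_inner_apply_add (hT : T.toLinearMap.IsSymmetric) (x y : E) :
    (⟪x + y, T (x + y)⟫_ℂ).re = (⟪x, T x⟫_ℂ).re + 2 * (⟪x, T y⟫_ℂ).re + (⟪y, T y⟫_ℂ).re := by
  have hyx : (⟪y, T x⟫_ℂ).re = (⟪x, T y⟫_ℂ).re :=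
    (congrArg Complex.re (hT y x).symm).trans (inner_re_symm (𝕜 := ℂ) _ _)
  simp only [map_add, inner_add_left, inner_add_right, Complex.add_re, hyx]
  ring

theorem re_inner_add_real_smul_apply (Y G : E →L[ℂ] E) (t : ℝ) (x : E) :
    (⟪x, (Y + (t : ℂ) • G) x⟫_ℂ).re = (⟪x, Y x⟫_ℂ).re + t * (⟪x, G x⟫_ℂ).re := by
  rw [add_apply, inner_add_right, Complex.add_re, re_inner_real_smul_apply]

theorem isSymmetric_neg (hT : T.toLinearMap.IsSymmetric) : (-T).toLinearMap.IsSymmetric :=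
  fun x y => by simpa using hT x y

theorem formOrthogonal_neg (T : E →L[ℂ] E) (P : Submodule ℂ E) :
    formOrthogonal (-T) P = formOrthogonal T P := by
  ext y
  simp [mem_formOrthogonal]

theorem PosOn.inf_formOrthogonal (h : PosOn T P) : P ⊓ formOrthogonal T P = ⊥ :=
  (Submodule.eq_bot_iff _).2 fun x ⟨hx, hxT⟩ => by
    by_contra hx0
    have := h x hx hx0
    rw [mem_formOrthogonal.1 hxT x hx] at this
    exact this.ne rfl

theorem PosOn.sup (hT : T.toLinearMap.IsSymmetric) (hP : PosOn T P) (hQ : PosOn T Q)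
    (hQP : Q ≤ formOrthogonal T P) : PosOn T (P ⊔ Q) := fun x hx hx0 => by
  obtain ⟨p, hp, q, hq, rfl⟩ := Submodule.mem_sup.1 hx
  rw [re_inner_apply_add hT, mem_formOrthogonal.1 (hQP hq) p hp, Complex.zero_re, mul_zero,
    add_zero]
  rcases eq_or_ne p 0 with rfl | hp0
  · rw [zero_add] at hx0
    simpa using hQ q hq hx0
  · rcases eq_or_ne q 0 with rfl | hq0
    · simpa using hP p hp hp0
    · exact add_pos (hP p hp hp0) (hQ q hq hq0)

theorem PosOn.finrank_sup [FiniteDimensional ℂ P] [FiniteDimensional ℂ Q] (hP : PosOn T P)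
    (hQP : Q ≤ formOrthogonal T P) :
    Module.finrank ℂ (P ⊔ Q : Submodule ℂ E) = Module.finrank ℂ P + Module.finrank ℂ Q := by
  rw [← Submodule.finrank_sup_add_finrank_inf_eq,
    le_bot_iff.1 ((inf_le_inf_left P hQP).trans hP.inf_formOrthogonal.le), finrank_bot, add_zero]

theorem HasPosSubspace.exists_finiteDimensional (h : HasPosSubspace k T M) :
    ∃ F ≤ M, FiniteDimensional ℂ F ∧ k ≤ Module.finrank ℂ F ∧ PosOn T F := by
  obtain ⟨F, hF, hk, hpos⟩ := h
  by_cases hfin : FiniteDimensional ℂ F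
  · exact ⟨F, hF, hfin, hk, hpos⟩
  · rw [Module.finrank_of_not_finite hfin] at hk
    exact ⟨⊥, bot_le, inferInstance, hk.trans (Nat.zero_le _), fun x hx hx0 => (hx0 hx).elim⟩

theorem exists_maximal_posOn (hT : T.toLinearMap.IsSymmetric) (h : ¬ HasPosSubspace k T M) :
    ∃ P ≤ M, FiniteDimensional ℂ P ∧ PosOn T P ∧
      ∀ x ∈ M ⊓ formOrthogonal T P, (⟪x, T x⟫_ℂ).re ≤ 0 := by
  induction k with
  | zero => exact (h ⟨⊥, bot_le, Nat.zero_le _, fun x hx hx0 => (hx0 hx).elim⟩).elim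
  | succ k ih =>
    by_cases hk : HasPosSubspace k T M
    · obtain ⟨P, hPM, hfin, hkP, hpos⟩ := hk.exists_finiteDimensional
      refine ⟨P, hPM, hfin, hpos, fun x ⟨hxM, hxP⟩ => not_lt.1 fun hx => h ?_⟩
      have hx0 : x ≠ 0 := by
        rintro rfl
        simp at hx
      have hspan : (ℂ ∙ x) ≤ formOrthogonal T P := (Submodule.span_singleton_le_iff_mem _ _).2 hxP
      refine ⟨P ⊔ ℂ ∙ x, sup_le hPM ((Submodule.span_singleton_le_iff_mem _ _).2 hxM), ?_,
        hpos.sup hT (fun y hy hy0 => ?_) hspan⟩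
      · rw [hpos.finrank_sup hspan, finrank_span_singleton hx0]
        exact Nat.add_le_add_right hkP 1
      · obtain ⟨z, rfl⟩ := Submodule.mem_span_singleton.1 hy
        rw [inner_smul_apply_smul_self, Complex.re_ofReal_mul]
        exact mul_pos (pow_pos (norm_pos_iff.2 (left_ne_zero_of_smul hy0)) 2) hx
    · exact ih hk

/-- A decomposition of the space into a positive, a negative and a neutral part for the form
`⟪x, T x⟫` of a symmetric operator `T` with finitely many positive and negative squares. -/
structure IsInertiaSplitting (T : E →L[ℂ] E) (P N Z : Submodule ℂ E) : Prop where
  finiteDimensional_pos : FiniteDimensional ℂ P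
  finiteDimensional_neg : FiniteDimensional ℂ N
  posOn : PosOn T P
  negOn : PosOn (-T) N
  neutral : ∀ x ∈ Z, (⟪x, T x⟫_ℂ).re = 0
  le_formOrthogonal_pos : Z ≤ formOrthogonal T P
  le_formOrthogonal_neg : Z ≤ formOrthogonal T N
  sup_eq_top : P ⊔ N ⊔ Z = ⊤

theorem IsInertiaSplitting.neg (h : IsInertiaSplitting T P N Z) :
    IsInertiaSplitting (-T) N P Z where
  finiteDimensional_pos := h.finiteDimensional_neg
  finiteDimensional_neg := h.finiteDimensional_pos
  posOn := h.negOn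
  negOn := (neg_neg T).symm ▸ h.posOn
  neutral x hx := by simp [h.neutral x hx]
  le_formOrthogonal_pos := (formOrthogonal_neg T N).symm ▸ h.le_formOrthogonal_neg
  le_formOrthogonal_neg := (formOrthogonal_neg T P).symm ▸ h.le_formOrthogonal_pos
  sup_eq_top := sup_comm P N ▸ h.sup_eq_top

theorem IsInertiaSplitting.not_finiteDimensional (h : IsInertiaSplitting T P N Z)
    (hE : ¬ FiniteDimensional ℂ E) : ¬ FiniteDimensional ℂ Z := fun _ => hE <| by
  have := h.finiteDimensional_pos
  have := h.finiteDimensional_neg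
  exact Module.finite_def.2 (h.sup_eq_top ▸ Module.Finite.iff_fg.1 inferInstance)

theorem exists_isInertiaSplitting (hT : T.toLinearMap.IsSymmetric) (hpos : ¬ HasPosSubspace k T ⊤)
    (hneg : ¬ HasPosSubspace k (-T) ⊤) : ∃ P N Z, IsInertiaSplitting T P N Z := by
  obtain ⟨P, -, hPfin, hP, hPmax⟩ := exists_maximal_posOn hT hpos
  obtain ⟨N, hNM, hNfin, hN, hNmax⟩ := exists_maximal_posOn (T := -T) (isSymmetric_neg hT)
    (M := formOrthogonal T P) (mt (·.mono le_top) hneg)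
  refine ⟨P, N, formOrthogonal T P ⊓ formOrthogonal (-T) N, hPfin, hNfin, hP, hN,
    fun x hx => le_antisymm (hPmax x ⟨trivial, hx.1⟩) ?_, inf_le_left,
    inf_le_right.trans (formOrthogonal_neg T N).le, ?_⟩
  · simpa using hNmax x hx
  · rw [sup_assoc, sup_inf_formOrthogonal hNM hN.inf_formOrthogonal,
      ← top_inf_eq (formOrthogonal T P), sup_inf_formOrthogonal le_top hP.inf_formOrthogonal]

theorem exists_forall_ge_sq_lt {a c : ℝ} (ha : 0 < a) (hc : 0 < c) (C : ℝ) :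
    ∃ t₀ : ℝ, ∀ t ≥ t₀, ∀ r s : ℝ, (r ≠ 0 ∨ s ≠ 0) →
      C * (2 * (s * r) + s ^ 2) < c * r ^ 2 + t * (a * s ^ 2) := by
  refine ⟨(1 + C + 2 * C ^ 2 / c) / a, fun t ht r s hrs => ?_⟩
  have hlarge : (1 + C + 2 * C ^ 2 / c) * s ^ 2 ≤ t * (a * s ^ 2) := by
    rw [← mul_assoc]
    exact mul_le_mul_of_nonneg_right ((div_le_iff₀ ha).1 ht) (sq_nonneg s)
  have hamgm : 0 ≤ c / 2 * (r - 2 * C / c * s) ^ 2 := by positivity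
  have hsquare : c / 2 * (r - 2 * C / c * s) ^ 2 =
      c * r ^ 2 - c / 2 * r ^ 2 - C * (2 * (s * r)) + 2 * C ^ 2 / c * s ^ 2 := by
    field_simp
    ring
  have hpos : 0 < c / 2 * r ^ 2 + s ^ 2 := by
    rcases hrs with hr | hs <;> positivity
  linarith

theorem exists_forall_ge_posOn_sup [FiniteDimensional ℂ P] (hY : Y.toLinearMap.IsSymmetric)
    (hG : G.toLinearMap.IsSymmetric) (hP : PosOn G P) (hc : 0 < c)
    (hQ : ∀ x ∈ Q, c * ‖x‖ ^ 2 ≤ (⟪x, Y x⟫_ℂ).re) (hQG : ∀ x ∈ Q, (⟪x, G x⟫_ℂ).re = 0)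
    (hQP : Q ≤ formOrthogonal G P) :
    ∃ t₀ : ℝ, ∀ t ≥ t₀, PosOn (Y + (t : ℂ) • G) (P ⊔ Q) := by
  obtain ⟨a, ha, hPa⟩ := hP.exists_lower_bound
  obtain ⟨t₀, ht₀⟩ := exists_forall_ge_sq_lt ha hc ‖Y‖
  refine ⟨max t₀ 0, fun t ht x hx hx0 => ?_⟩
  obtain ⟨p, hp, q, hq, rfl⟩ := Submodule.mem_sup.1 hx
  have hcross := (abs_le.1 (abs_re_inner_apply_le Y p q)).1
  have hself := (abs_le.1 (abs_re_inner_apply_le Y p p)).1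
  have hscale := mul_le_mul_of_nonneg_left (hPa p hp) ((le_max_right _ _).trans ht)
  have hnum := ht₀ t ((le_max_left _ _).trans ht) ‖q‖ ‖p‖ (by
    by_contra! h
    exact hx0 (by rw [norm_eq_zero.1 h.1, norm_eq_zero.1 h.2, add_zero]))
  rw [re_inner_add_real_smul_apply, re_inner_apply_add hY, re_inner_apply_add hG, hQG q hq,
    mem_formOrthogonal.1 (hQP hq) p hp, Complex.zero_re, mul_zero, add_zero, add_zero]
  linarith [hQ q hq]

/- Otherwise a `k`-dimensional subspace meets the complement `N ⊔ Z ⊓ formOrthogonal Y Q`, on which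
`Y + t G` is smaller than `c` for large `t`. -/
theorem IsInertiaSplitting.le_finrank_sup [FiniteDimensional ℂ Q] (h : IsInertiaSplitting G P N Z)
    (hY : Y.toLinearMap.IsSymmetric) (hG : G.toLinearMap.IsSymmetric) (hc : 0 < c)
    (hpencil : ∀ t : ℝ, HasCompressionGE k (Y + (t : ℂ) • G) c) (hQZ : Q ≤ Z) (hQ : PosOn Y Q)
    (hQmax : ∀ x ∈ Z ⊓ formOrthogonal Y Q, (⟪x, Y x⟫_ℂ).re ≤ 0) :
    k ≤ Module.finrank ℂ (P ⊔ Q : Submodule ℂ E) := by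
  have := h.finiteDimensional_pos
  have := h.finiteDimensional_neg
  let S : E →L[ℂ] E := (c : ℂ) • .id ℂ E - Y
  have hS : S.toLinearMap.IsSymmetric :=
    (LinearMap.IsSymmetric.smul (Complex.conj_ofReal c) .id).sub hY
  have hSx : ∀ x, (⟪x, S x⟫_ℂ).re = c * ‖x‖ ^ 2 - (⟪x, Y x⟫_ℂ).re := fun x => by
    rw [norm_sq_eq_re_inner (𝕜 := ℂ) x, sub_apply, inner_sub_right, Complex.sub_re,
      re_inner_real_smul_apply, ContinuousLinearMap.id_apply, RCLike.re_eq_complex_re]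
  obtain ⟨t, ht⟩ := exists_forall_ge_posOn_sup (Q := Z ⊓ formOrthogonal Y Q) hS
    (isSymmetric_neg hG) h.negOn hc (fun x hx => by linarith [hSx x, hQmax x hx])
    (fun x hx => h.neg.neutral x hx.1)
    (inf_le_left.trans h.neg.le_formOrthogonal_pos)
  obtain ⟨F, hkF, hF⟩ := hpencil t
  by_contra! hk
  have : FiniteDimensional ℂ F := Module.finite_of_finrank_pos (by omega)
  have hsup : P ⊔ Q ⊔ (N ⊔ Z ⊓ formOrthogonal Y Q) = ⊤ := by
    rw [sup_assoc, sup_left_comm Q, sup_inf_formOrthogonal hQZ hQ.inf_formOrthogonal, ← sup_assoc,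
      h.sup_eq_top]
  obtain ⟨x, ⟨hxF, hx⟩, hx0⟩ := (Submodule.ne_bot_iff _).1
    (inf_ne_bot_of_sup_eq_top hsup (hk.trans_le hkF))
  have hneg := ht t le_rfl x hx hx0
  have hge := hF x hxF
  rw [re_inner_add_real_smul_apply, hSx, neg_apply, inner_neg_right, Complex.neg_re] at hneg
  rw [re_inner_add_real_smul_apply] at hge
  linarith

theorem IsInertiaSplitting.exists_forall_ge_posOn (h : IsInertiaSplitting G P N Z)
    (hY : Y.toLinearMap.IsSymmetric) (hG : G.toLinearMap.IsSymmetric) (hc : 0 < c)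
    (hpencil : ∀ t : ℝ, HasCompressionGE k (Y + (t : ℂ) • G) c) :
    ∃ (F : Submodule ℂ E) (t₀ : ℝ), FiniteDimensional ℂ F ∧ k ≤ Module.finrank ℂ F ∧
      ∀ t ≥ t₀, PosOn (Y + (t : ℂ) • G) F := by
  have := h.finiteDimensional_pos
  by_cases hZ : HasPosSubspace k Y Z
  · obtain ⟨F, hFZ, hfin, hkF, hpos⟩ := hZ.exists_finiteDimensional
    refine ⟨F, 0, hfin, hkF, fun t _ x hx hx0 => ?_⟩
    rw [re_inner_add_real_smul_apply, h.neutral x (hFZ hx), mul_zero, add_zero]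
    exact hpos x hx hx0
  · obtain ⟨Q, hQZ, hQfin, hQ, hQmax⟩ := exists_maximal_posOn hY hZ
    obtain ⟨d, hd, hQd⟩ := hQ.exists_lower_bound
    obtain ⟨t₀, ht₀⟩ := exists_forall_ge_posOn_sup hY hG h.posOn hd hQd
      (fun x hx => h.neutral x (hQZ hx)) (hQZ.trans h.le_formOrthogonal_pos)
    exact ⟨P ⊔ Q, t₀, inferInstance, h.le_finrank_sup hY hG hc hpencil hQZ hQ hQmax, ht₀⟩

theorem IsInertiaSplitting.exists_finiteDimensional_hasPosSubspace
    (h : IsInertiaSplitting G P N Z) (hY : Y.toLinearMap.IsSymmetric)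
    (hG : G.toLinearMap.IsSymmetric) (hk : 1 ≤ k) (hc : 0 < c)
    (hpencil : ∀ t : ℝ, HasCompressionGE k (Y + (t : ℂ) • G) c) :
    ∃ M : Submodule ℂ E, FiniteDimensional ℂ M ∧
      ∀ t : ℝ, HasPosSubspace k (Y + (t : ℂ) • G) M := by
  have hflip : ∀ t : ℝ, Y + (t : ℂ) • -G = Y + ((-t : ℝ) : ℂ) • G := fun t => by
    rw [smul_neg, Complex.ofReal_neg, neg_smul]
  obtain ⟨F₁, t₁, hfin₁, hk₁, hF₁⟩ := h.exists_forall_ge_posOn hY hG hc hpencil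
  obtain ⟨F₂, t₂, hfin₂, hk₂, hF₂⟩ := h.neg.exists_forall_ge_posOn hY (isSymmetric_neg hG) hc
    fun t => hflip t ▸ hpencil (-t)
  obtain ⟨d, hd, M, hM, hcomp⟩ := exists_uniformCompressionGE_of_isCompact (k := k)
    ((isCompact_Icc (a := -t₂) (b := t₁)).image
      (f := fun t : ℝ => Y + (t : ℂ) • G) (by fun_prop)) hk (by
        rintro _ ⟨t, -, rfl⟩
        exact (hpencil t).hasPosSubspace hc)
  refine ⟨F₁ ⊔ F₂ ⊔ M, inferInstance, fun t => ?_⟩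
  rcases le_total t₁ t with ht | ht
  · exact ⟨F₁, le_sup_left.trans le_sup_left, hk₁, hF₁ t ht⟩
  rcases le_total t (-t₂) with ht' | ht'
  · have := hF₂ (-t) (le_neg.1 ht')
    rw [hflip, neg_neg] at this
    exact ⟨F₂, le_sup_right.trans le_sup_left, hk₂, this⟩
  · obtain ⟨F, hFM, hkF, hF⟩ := hcomp _ ⟨t, ⟨ht', ht⟩, rfl⟩
    exact ⟨F, hFM.trans le_sup_right, hkF, .of_lower_bound hd hF⟩

end InertiaSplittings

section Compressions

variable {E : Type*} [NormedAddCommGroup E] [InnerProductSpace ℂ E] {T : E →L[ℂ] E} {k : ℕ}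
  {c : ℝ} {μ : ℂ}

theorem lambdaSA_eq_sSup (k : ℕ) (T : E →L[ℂ] E) :
    lambdaSA k T = sSup {t | HasCompressionGE k T t} := by
  refine congrArg sSup (Set.ext fun t => ⟨fun ⟨F, hF, h⟩ => ?_, fun ⟨F, hF, h⟩ => ?_⟩)
  · exact ⟨F, hF.ge, lower_bound_of_norm_eq_one h⟩
  · obtain ⟨V, hVF, hV⟩ := exists_le_finrank_eq
      ((Nat.cast_le.2 hF).trans (Cardinal.natCast_toNat_le _))
    exact ⟨V, hV, fun x hx hx1 => by simpa [hx1] using h x (hVF hx)⟩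

theorem hasCompressionGE_neg_norm (hE : ¬ FiniteDimensional ℂ E) (k : ℕ) (T : E →L[ℂ] E) :
    HasCompressionGE k T (-‖T‖) := by
  obtain ⟨F, -, hF⟩ := exists_le_finrank_eq (N := (⊤ : Submodule ℂ E))
    ((natCast_le_rank_of_not_finiteDimensional hE k).trans_eq (rank_top ℂ E).symm)
  refine ⟨F, hF.ge, fun x _ => ?_⟩
  rw [sq, neg_mul]
  exact (abs_le.1 (abs_re_inner_apply_le T x x)).1

theorem HasCompressionGE.le_norm (h : HasCompressionGE k T c) (hk : 1 ≤ k) : c ≤ ‖T‖ := by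
  obtain ⟨F, hF, hFc⟩ := h
  have : Nontrivial F := Module.nontrivial_of_finrank_pos (R := ℂ) (by omega)
  obtain ⟨x, hx⟩ := exists_norm_eq (E := F) zero_le_one
  have hx1 : ‖(x : E)‖ = 1 := hx
  simpa [hx1] using (hFc x x.2).trans (abs_le.1 (abs_re_inner_apply_le T x x)).2

theorem le_lambdaSA_iff (hE : ¬ FiniteDimensional ℂ E) (hk : 1 ≤ k) :
    c ≤ lambdaSA k T ↔ ∀ d < c, HasCompressionGE k T d := by
  rw [lambdaSA_eq_sSup]
  have hne : {t | HasCompressionGE k T t}.Nonempty := ⟨-‖T‖, hasCompressionGE_neg_norm hE k T⟩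
  have hbdd : BddAbove {t | HasCompressionGE k T t} := ⟨‖T‖, fun t ht => ht.le_norm hk⟩
  refine ⟨fun h d hd => ?_, fun h => le_of_forall_lt_imp_le_of_dense fun d hd =>
    le_csSup hbdd (h d hd)⟩
  obtain ⟨t, ht, hdt⟩ := exists_lt_of_lt_csSup hne (hd.trans_le h)
  exact ht.mono hdt.le

theorem inner_sub_smul_id_apply (A : E →L[ℂ] E) (μ : ℂ) (x y : E) :
    ⟪x, (A - μ • .id ℂ E) y⟫_ℂ = ⟪x, A y⟫_ℂ - μ * ⟪x, y⟫_ℂ := by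
  simp

theorem hasCompressionGE_smul_sub_iff (u : ℂ) :
    HasCompressionGE k (u • (T - μ • .id ℂ E)) c ↔
      HasCompressionGE k (u • T) (c + (u * μ).re) := by
  have hform : ∀ x : E, (⟪x, (u • (T - μ • .id ℂ E)) x⟫_ℂ).re =
      (⟪x, (u • T) x⟫_ℂ).re - (u * μ).re * ‖x‖ ^ 2 := fun x => by
    rw [smul_apply, inner_smul_right, inner_sub_smul_id_apply, inner_self_eq_norm_sq_to_K, mul_sub,
      ← mul_assoc, Complex.sub_re, smul_apply, inner_smul_right]
    norm_cast
    exact congrArg _ (Complex.re_mul_ofReal _ _)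
  simp only [HasCompressionGE, hform, le_sub_iff_add_le, add_mul]

theorem inner_apply_eq_zero_of_mem_span {ι : Type*} {z : ι → E} (h : ∀ i j, ⟪z i, T (z j)⟫_ℂ = 0)
    {x y : E} (hx : x ∈ Submodule.span ℂ (Set.range z))
    (hy : y ∈ Submodule.span ℂ (Set.range z)) : ⟪x, T y⟫_ℂ = 0 := by
  induction hx, hy using Submodule.span_induction₂ with
  | mem_mem x y hx hy =>
    obtain ⟨i, rfl⟩ := hx
    obtain ⟨j, rfl⟩ := hy
    exact h i j
  | zero_left => exact inner_zero_left _
  | zero_right => rw [map_zero, inner_zero_right]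
  | add_left x y z _ _ _ hx hy => rw [inner_add_left, hx, hy, add_zero]
  | add_right x y z _ _ _ hx hy => rw [map_add, inner_add_right, hx, hy, add_zero]
  | smul_left r x y _ _ h => rw [inner_smul_left, h, mul_zero]
  | smul_right r x y _ _ h => rw [map_smul, inner_smul_right, h, mul_zero]

end Compressions

section NumericalRanges

variable {k : ℕ} {A T : H →L[ℂ] H} {μ w : ℂ} {c : ℝ}

theorem re_inner_reOp_apply (T : H →L[ℂ] H) (x : H) :
    (⟪x, reOp T x⟫_ℂ).re = (⟪x, T x⟫_ℂ).re := by
  have hadj : (⟪x, ContinuousLinearMap.adjoint T x⟫_ℂ).re = (⟪x, T x⟫_ℂ).re := by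
    rw [ContinuousLinearMap.adjoint_inner_right]
    exact inner_re_symm (𝕜 := ℂ) _ _
  rw [reOp, ← Complex.ofReal_ofNat, ← Complex.ofReal_inv, re_inner_real_smul_apply, add_apply,
    inner_add_right, Complex.add_re, hadj]
  ring

theorem isSymmetric_reOp (T : H →L[ℂ] H) : (reOp T).toLinearMap.IsSymmetric := fun x y => by
  simp only [reOp, ContinuousLinearMap.coe_coe, smul_apply, add_apply, inner_smul_left,
    inner_smul_right, inner_add_left, inner_add_right, ContinuousLinearMap.adjoint_inner_left,
    ContinuousLinearMap.adjoint_inner_right, map_inv₀, map_ofNat, add_comm]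

theorem exists_mem_Ico_exp_mul_I_eq {u : ℂ} (hu : ‖u‖ = 1) :
    ∃ ξ ∈ Set.Ico 0 (2 * Real.pi), Complex.exp (ξ * I) = u := by
  obtain ⟨θ, rfl⟩ := Complex.norm_eq_one_iff u |>.1 hu
  have hper : Function.Periodic (fun ξ : ℝ => Complex.exp (ξ * I)) (2 * Real.pi) := fun ξ => by
    simp [add_mul, Complex.exp_add, Complex.exp_two_pi_mul_I]
  obtain ⟨ξ, hξ, heq⟩ := hper.exists_mem_Ico₀ Real.two_pi_pos θ
  exact ⟨ξ, hξ, heq.symm⟩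

theorem mem_omegaK_iff (hH : ¬ FiniteDimensional ℂ H) (hk : 1 ≤ k) :
    w ∈ omegaK k A ↔
      ∀ u : ℂ, ‖u‖ = 1 → ∀ c < (u * w).re, HasCompressionGE k (u • A) c := by
  have hlam : ∀ u : ℂ, (u * w).re ≤ lambdaSA k (reOp (u • A)) ↔
      ∀ c < (u * w).re, HasCompressionGE k (u • A) c := fun u => by
    simp only [le_lambdaSA_iff hH hk, HasCompressionGE, re_inner_reOp_apply]
  refine ⟨fun h u hu => ?_, fun h ξ _ => (hlam _).2 (h _ (Complex.norm_exp_ofReal_mul_I ξ))⟩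
  obtain ⟨ξ, hξ, rfl⟩ := exists_mem_Ico_exp_mul_I_eq hu
  exact (hlam _).1 (h ξ hξ)

theorem hasCompressionGE_of_mem_omegaK (hH : ¬ FiniteDimensional ℂ H) (hk : 1 ≤ k)
    (hw : w ∈ omegaK k A) {u : ℂ} (hu : u ≠ 0) (hc : c < (u * w).re) :
    HasCompressionGE k (u • A) c := by
  have hnorm : 0 < ‖u‖ := norm_pos_iff.2 hu
  have hpolar : ((‖u‖ : ℝ) : ℂ) * (u / ‖u‖) = u :=
    mul_div_cancel₀ u (Complex.ofReal_ne_zero.2 hnorm.ne')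
  have hunit := (mem_omegaK_iff hH hk).1 hw (u / ‖u‖) (by simp [hu]) (c / ‖u‖) (by
    rwa [div_lt_iff₀' hnorm, ← Complex.re_ofReal_mul, ← mul_assoc, hpolar])
  simpa only [smul_smul, hpolar, mul_div_cancel₀ c hnorm.ne'] using hunit.real_smul hnorm.le

theorem mem_omegaK_sub_iff (hH : ¬ FiniteDimensional ℂ H) (hk : 1 ≤ k) :
    w ∈ omegaK k (A - μ • .id ℂ H) ↔ μ + w ∈ omegaK k A := by
  simp only [mem_omegaK_iff hH hk, hasCompressionGE_smul_sub_iff]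
  refine forall₂_congr fun u _ => ⟨fun h c hc => ?_, fun h c hc => h _ ?_⟩
  · simpa using h (c - (u * μ).re) (by simpa [mul_add, sub_lt_iff_lt_add'] using hc)
  · simpa [mul_add, add_comm c] using hc

theorem mul_mem_omegaK_smul (hH : ¬ FiniteDimensional ℂ H) (hk : 1 ≤ k) {v : ℂ} (hv : v ≠ 0)
    (hw : w ∈ omegaK k A) : v * w ∈ omegaK k (v • A) := by
  refine (mem_omegaK_iff hH hk).2 fun u hu c hc => ?_
  rw [smul_smul]
  exact hasCompressionGE_of_mem_omegaK hH hk hw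
    (mul_ne_zero (norm_ne_zero_iff.1 (hu ▸ one_ne_zero)) hv) (by rwa [mul_assoc])

theorem hasPosSubspace_of_mem_omegaK (hH : ¬ FiniteDimensional ℂ H) (hk : 1 ≤ k)
    (hw : w ∈ omegaK k A) {u : ℂ} (h : 0 < (u * w).re) : HasPosSubspace k (u • A) ⊤ := by
  have hu : u ≠ 0 := by
    rintro rfl
    simp at h
  exact (hasCompressionGE_of_mem_omegaK hH hk hw hu (half_lt_self h)).hasPosSubspace (half_pos h)

theorem omegaK_eq_biInter (k : ℕ) (A : H →L[ℂ] H) :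
    omegaK k A = ⋂ ξ ∈ Set.Ico 0 (2 * Real.pi),
      {w : ℂ | (Complex.exp (ξ * I) * w).re ≤ lambdaSA k (reOp (Complex.exp (ξ * I) • A))} := by
  ext w
  simp [omegaK]

theorem convex_omegaK (k : ℕ) (A : H →L[ℂ] H) : Convex ℝ (omegaK k A) := by
  rw [omegaK_eq_biInter]
  exact convex_iInter₂ fun ξ _ => convex_halfSpace_le
    (Complex.reLm ∘ₗ LinearMap.mulLeft ℝ (Complex.exp (ξ * I))).isLinear _

theorem isClosed_omegaK (k : ℕ) (A : H →L[ℂ] H) : IsClosed (omegaK k A) := by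
  rw [omegaK_eq_biInter]
  exact isClosed_biInter fun ξ _ => isClosed_le (by fun_prop) continuous_const

theorem hasZeroCompression_of_mem_rankKRange (h : μ ∈ rankKRange k A) :
    HasZeroCompression k (A - μ • .id ℂ H) := by
  obtain ⟨P, ⟨hPsa, hPP⟩, hrank, hPA⟩ := h
  obtain ⟨f, hf⟩ := exists_linearIndependent_of_le_rank hrank.ge
  refine ⟨fun i => f i, hf.map' _ (Submodule.ker_subtype _), fun i j => ?_⟩
  obtain ⟨a, ha⟩ := (f i).2
  obtain ⟨b, hb⟩ := (f j).2
  beta_reduce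
  rw [← ha, ← hb]
  have hPP' : P (P b) = P b := DFunLike.congr_fun hPP b
  have hPA' : P (A (P b)) = μ • P b := DFunLike.congr_fun hPA b
  calc ⟪P a, (A - μ • .id ℂ H) (P b)⟫_ℂ = ⟪a, P ((A - μ • .id ℂ H) (P b))⟫_ℂ := by
        rw [← ContinuousLinearMap.adjoint_inner_right, hPsa.adjoint_eq]
    _ = ⟪a, (0 : H)⟫_ℂ := by
        simp only [sub_apply, smul_apply, ContinuousLinearMap.id_apply, map_sub, map_smul, hPA',
          hPP', sub_self]
    _ = 0 := inner_zero_right a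

theorem mem_rankKRange_of_hasZeroCompression (h : HasZeroCompression k (A - μ • .id ℂ H)) :
    μ ∈ rankKRange k A := by
  obtain ⟨z, hz, hA⟩ := h
  let W := Submodule.span ℂ (Set.range z)
  have : FiniteDimensional ℂ W := FiniteDimensional.span_of_finite ℂ (Set.finite_range z)
  have hform : ∀ x ∈ W, ∀ y ∈ W, ⟪x, A y⟫_ℂ = μ * ⟪x, y⟫_ℂ := fun x hx y hy => by
    rw [← sub_eq_zero, ← inner_sub_smul_id_apply]
    exact inner_apply_eq_zero_of_mem_span hA hx hy
  refine ⟨W.starProjection, ⟨isSelfAdjoint_starProjection W, W.isIdempotentElem_starProjection⟩,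
    ?_, ?_⟩
  · rw [opRank, W.range_starProjection, ← Module.finrank_eq_rank, finrank_span_eq_card hz,
      Fintype.card_fin]
  · refine ContinuousLinearMap.ext fun y => ext_inner_left ℂ fun x => ?_
    have hx := W.starProjection_apply_mem x
    have hy := W.starProjection_apply_mem y
    calc ⟪x, W.starProjection (A (W.starProjection y))⟫_ℂ
        = ⟪W.starProjection x, A (W.starProjection y)⟫_ℂ :=
          (W.inner_starProjection_left_eq_right _ _).symm
      _ = μ * ⟪W.starProjection x, W.starProjection y⟫_ℂ := hform _ hx _ hy
      _ = ⟪x, (μ • W.starProjection) y⟫_ℂ := by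
          rw [smul_apply, inner_smul_right, W.inner_starProjection_left_eq_right,
            W.starProjection_eq_self_iff.2 hy]

theorem mem_rankKRange_iff :
    μ ∈ rankKRange k A ↔ HasZeroCompression k (A - μ • .id ℂ H) :=
  ⟨hasZeroCompression_of_mem_rankKRange, mem_rankKRange_of_hasZeroCompression⟩

theorem rankKRange_subset_omegaK (hH : ¬ FiniteDimensional ℂ H) (hk : 1 ≤ k) (A : H →L[ℂ] H) :
    rankKRange k A ⊆ omegaK k A := fun μ hμ => by
  obtain ⟨z, hz, hA⟩ := mem_rankKRange_iff.1 hμ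
  rw [← add_zero μ, ← mem_omegaK_sub_iff hH hk, mem_omegaK_iff hH hk]
  refine fun u _ c hc => ⟨.span ℂ (Set.range z), ?_, fun x hx => ?_⟩
  · rw [finrank_span_eq_card hz, Fintype.card_fin]
  · rw [mul_zero, Complex.zero_re] at hc
    rw [smul_apply, inner_smul_right, inner_apply_eq_zero_of_mem_span hA hx hx, mul_zero,
      Complex.zero_re]
    exact mul_nonpos_of_nonpos_of_nonneg hc.le (sq_nonneg _)

theorem rankKRange_nonempty (hH : ¬ FiniteDimensional ℂ H) (A : H →L[ℂ] H) (k : ℕ) :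
    (rankKRange k A).Nonempty := by
  obtain ⟨v, p, hv, hvp⟩ := exists_isOrthonormalDiagonal_const (N := (⊤ : Submodule ℂ H))
    (not_finiteDimensional_top hH) A k
  refine ⟨p, mem_rankKRange_iff.2 ⟨v, hv.orthonormal.linearIndependent, fun i j => ?_⟩⟩
  rw [inner_sub_smul_id_apply]
  rcases eq_or_ne i j with rfl | hij
  · rw [hvp, inner_self_eq_norm_sq_to_K, hv.orthonormal.1]
    simp
  · rw [hv.diagonal hij, hv.orthonormal.2 hij, mul_zero, sub_zero]

end NumericalRanges

section RelativeCore

variable {V : Type*} [AddCommGroup V] [Module ℝ V] {s : Set V} {x y : V}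

/-- The algebraic relative interior of `s`: the points of `s` beyond which every segment from a
point of `s` can be prolonged inside `s`. It contains the relative interior, and avoids any mention
of the affine span. -/
def relativeCore (s : Set V) : Set V :=
  {x ∈ s | ∀ y ∈ s, ∃ δ : ℝ, 0 < δ ∧ x + δ • (x - y) ∈ s}

theorem exists_neg_smul_mem_of_zero_mem_relativeCore (h : 0 ∈ relativeCore s) (hx : x ∈ s) :
    ∃ δ : ℝ, 0 < δ ∧ -(δ • x) ∈ s := by
  simpa using h.2 x hx

theorem combo_mem_relativeCore (hs : Convex ℝ s) (hx : x ∈ relativeCore s) (hy : y ∈ s)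
    {a b : ℝ} (ha : 0 < a) (hb : 0 ≤ b) (hab : a + b = 1) : a • x + b • y ∈ relativeCore s := by
  refine ⟨hs hx.1 hy ha.le hb hab, fun z hz => ?_⟩
  obtain ⟨δ, hδ, hmem⟩ := hx.2 z hz
  refine ⟨a * δ / (1 + b * δ), by positivity, ?_⟩
  convert hs hmem hy (a := a / (1 + b * δ)) (b := b * (1 + δ) / (1 + b * δ)) (by positivity)
    (by positivity) ?_ using 1
  · obtain rfl : a = 1 - b := by linarith
    match_scalars <;> field_simp <;> ring
  · field_simp
    linear_combination hab

variable [TopologicalSpace V] [IsTopologicalAddGroup V] [ContinuousSMul ℝ V]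

theorem intrinsicInterior_subset_relativeCore : intrinsicInterior ℝ s ⊆ relativeCore s := by
  intro x hx
  have hxs : x ∈ s := intrinsicInterior_subset hx
  refine ⟨hxs, fun y hy => ?_⟩
  obtain ⟨p, hp, rfl⟩ := mem_intrinsicInterior.1 hx
  let g : ℝ → affineSpan ℝ s := fun t => ⟨AffineMap.lineMap (p : V) y (-t),
    AffineMap.lineMap_mem _ (subset_affineSpan ℝ s hxs) (subset_affineSpan ℝ s hy)⟩
  have hg : Continuous g :=
    (AffineMap.lineMap_continuous.comp continuous_neg).subtype_mk _
  have hg0 : g 0 = p := Subtype.ext (by simp [g])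
  have hev : ∀ᶠ t in 𝓝[>] (0 : ℝ), g t ∈ interior ((↑) ⁻¹' s : Set (affineSpan ℝ s)) :=
    nhdsWithin_le_nhds (hg.continuousAt.eventually_mem (isOpen_interior.mem_nhds (hg0 ▸ hp)))
  obtain ⟨δ, hδs, hδ⟩ := (hev.and self_mem_nhdsWithin).exists
  have hmem : AffineMap.lineMap (p : V) y (-δ) ∈ s :=
    (interior_subset hδs : g δ ∈ ((↑) ⁻¹' s : Set (affineSpan ℝ s)))
  refine ⟨δ, hδ, ?_⟩
  rwa [AffineMap.lineMap_apply, vsub_eq_sub, vadd_eq_add, neg_smul, ← smul_neg, neg_sub,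
    add_comm] at hmem

theorem subset_closure_relativeCore (hs : Convex ℝ s) (hne : (relativeCore s).Nonempty) :
    s ⊆ closure (relativeCore s) := by
  obtain ⟨x, hx⟩ := hne
  intro y hy
  refine closure_mono ?_ (segment_subset_closure_openSegment (right_mem_segment ℝ x y))
  rintro _ ⟨a, b, ha, hb, hab, rfl⟩
  exact combo_mem_relativeCore hs hx hy ha hb.le hab

end RelativeCore

section RelativeCoreOfOmega

variable {k : ℕ} {A B : H →L[ℂ] H} {w μ : ℂ}

theorem re_eq_zero_of_mem_omegaK (hH : ¬ FiniteDimensional ℂ H) (hk : 1 ≤ k)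
    (h0 : 0 ∈ relativeCore (omegaK k B)) (hB : ¬ HasPosSubspace k B ⊤) (hw : w ∈ omegaK k B) :
    w.re = 0 := by
  have hle : ∀ z ∈ omegaK k B, z.re ≤ 0 := fun z hz => not_lt.1 fun hpos =>
    hB (by simpa using hasPosSubspace_of_mem_omegaK hH hk hz (u := 1) (by rwa [one_mul]))
  obtain ⟨δ, hδ, hneg⟩ := exists_neg_smul_mem_of_zero_mem_relativeCore h0 hw
  have hge : -(δ * w.re) ≤ 0 := by simpa using hle _ hneg
  exact le_antisymm (hle w hw) (nonneg_of_mul_nonneg_right (neg_nonpos.1 hge) hδ)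

theorem exists_forall_hasCompressionGE (hH : ¬ FiniteDimensional ℂ H) (hk : 1 ≤ k)
    (h0 : 0 ∈ relativeCore (omegaK k B)) (hw : w ∈ omegaK k B) (hw0 : w ≠ 0) (hre : w.re = 0)
    {y : ℝ} (hy : y ≠ 0) : ∃ c > 0, ∀ u : ℂ, u.im = y → HasCompressionGE k (u • B) c := by
  have him : w.im ≠ 0 := fun him => hw0 (Complex.ext hre him)
  obtain ⟨z, hz, hzre, hzim⟩ : ∃ z ∈ omegaK k B, z.re = 0 ∧ y * z.im < 0 := by
    rcases (mul_ne_zero hy him).lt_or_gt with hlt | hgt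
    · exact ⟨w, hw, hre, hlt⟩
    · obtain ⟨δ, hδ, hneg⟩ := exists_neg_smul_mem_of_zero_mem_relativeCore h0 hw
      refine ⟨_, hneg, by simp [hre], ?_⟩
      have : y * (-(δ • w)).im = -(δ * (y * w.im)) := by
        rw [Complex.neg_im, Complex.smul_im, smul_eq_mul]
        ring
      rw [this]
      exact neg_neg_of_pos (mul_pos hδ hgt)
  refine ⟨-(y * z.im) / 2, half_pos (neg_pos.2 hzim), fun u hu => ?_⟩
  have hu0 : u ≠ 0 := by
    rintro rfl
    exact hy hu.symm
  refine hasCompressionGE_of_mem_omegaK hH hk hz hu0 ?_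
  rw [Complex.mul_re, hzre, hu, mul_zero, zero_sub]
  exact half_lt_self (neg_pos.2 hzim)

/- The half circle is compact, so one `c > 0` serves all its points; `u.re ≥ -1` does the rest. -/
theorem exists_neg_mem_omegaK (hH : ¬ FiniteDimensional ℂ H) (hk : 1 ≤ k) (h0 : 0 ∈ omegaK k B)
    (h : ∀ u : ℂ, u ≠ 0 → u.re ≤ 0 → HasPosSubspace k (u • B) ⊤) :
    ∃ c : ℝ, c < 0 ∧ (c : ℂ) ∈ omegaK k B := by
  have hcpt : IsCompact ((fun u : ℂ => u • B) '' (Metric.sphere 0 1 ∩ {u | u.re ≤ 0})) :=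
    ((isCompact_sphere 0 1).inter_right
      (isClosed_le Complex.continuous_re continuous_const)).image (by fun_prop)
  obtain ⟨c, hc, M, -, hMc⟩ := exists_uniformCompressionGE_of_isCompact hcpt hk (by
    rintro _ ⟨u, ⟨hu, hure⟩, rfl⟩
    exact h u (ne_zero_of_mem_unit_sphere ⟨u, hu⟩) hure)
  refine ⟨-c, neg_neg_of_pos hc, (mem_omegaK_iff hH hk).2 fun u hu d hd => ?_⟩
  rw [Complex.re_mul_ofReal] at hd
  rcases le_or_gt u.re 0 with hure | hure
  · obtain ⟨F, -, hkF, hF⟩ := hMc _ ⟨u, ⟨mem_sphere_zero_iff_norm.2 hu, hure⟩, rfl⟩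
    have hone : -u.re ≤ 1 := hu ▸ (neg_le_abs _).trans (Complex.abs_re_le_norm u)
    have hge : HasCompressionGE k (u • B) c := ⟨F, hkF, hF⟩
    exact hge.mono (by nlinarith)
  · refine (mem_omegaK_iff hH hk).1 h0 u hu d ?_
    rw [mul_zero, Complex.zero_re]
    nlinarith

theorem not_hasPosSubspace_neg (hH : ¬ FiniteDimensional ℂ H) (hk : 1 ≤ k)
    (h0 : 0 ∈ relativeCore (omegaK k B)) (hre : ∀ z ∈ omegaK k B, z.re = 0)
    (hw : w ∈ omegaK k B) (hw0 : w ≠ 0) : ¬ HasPosSubspace k (-B) ⊤ := fun hneg => by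
  obtain ⟨c, hc, hmem⟩ := exists_neg_mem_omegaK hH hk h0.1 fun u hu0 hure => by
    rcases eq_or_ne u.im 0 with him | him
    · have hlt : u.re < 0 := hure.lt_of_ne fun h => hu0 (Complex.ext h him)
      have hu : u • B = ((-u.re : ℝ) : ℂ) • -B := by
        rw [smul_neg, Complex.ofReal_neg, neg_smul, neg_neg]
        exact congrArg (· • B) (Complex.ext rfl him)
      exact hu ▸ hneg.real_smul (neg_pos.2 hlt)
    · obtain ⟨c, hc, hcomp⟩ := exists_forall_hasCompressionGE hH hk h0 hw hw0 (hre w hw) him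
      exact (hcomp u rfl).hasPosSubspace hc
  exact hc.ne (hre _ hmem)

theorem re_inner_reOp_pencil_apply (B : H →L[ℂ] H) (t y : ℝ) (x : H) :
    (⟪x, (reOp ((y * I) • B) + (t : ℂ) • reOp B) x⟫_ℂ).re = (⟪x, ((t + y * I) • B) x⟫_ℂ).re := by
  rw [re_inner_add_real_smul_apply, re_inner_reOp_apply, re_inner_reOp_apply,
    ← re_inner_real_smul_apply, add_smul, add_apply, inner_add_right, Complex.add_re, add_comm]

theorem IsInertiaSplitting.exists_hasPosSubspace_smul {P N Z : Submodule ℂ H}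
    (h : IsInertiaSplitting (reOp B) P N Z) (hk : 1 ≤ k) {y c : ℝ} (hc : 0 < c)
    (hcomp : ∀ u : ℂ, u.im = y → HasCompressionGE k (u • B) c) :
    ∃ M : Submodule ℂ H, FiniteDimensional ℂ M ∧
      ∀ u : ℂ, u.im = y → HasPosSubspace k (u • B) M := by
  obtain ⟨M, hM, hpos⟩ := h.exists_finiteDimensional_hasPosSubspace
    (isSymmetric_reOp ((y * I) • B)) (isSymmetric_reOp B) hk hc fun t => by
      simpa only [HasCompressionGE, re_inner_reOp_pencil_apply] using hcomp (t + y * I) (by simp)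
  refine ⟨M, hM, fun u hu => ?_⟩
  have hut := hpos u.re
  simp only [HasPosSubspace, PosOn, re_inner_reOp_pencil_apply] at hut
  rwa [← hu, Complex.re_add_im] at hut

theorem hasZeroCompression_of_mem_omegaK (hH : ¬ FiniteDimensional ℂ H) (hk : 1 ≤ k)
    (h0 : 0 ∈ relativeCore (omegaK k B)) (hre : ∀ z ∈ omegaK k B, z.re = 0)
    (hB : ¬ HasPosSubspace k B ⊤) (hw : w ∈ omegaK k B) (hw0 : w ≠ 0) :
    HasZeroCompression k B := by
  have hneg := not_hasPosSubspace_neg hH hk h0 hre hw hw0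
  obtain ⟨P, N, Z, hsplit⟩ := exists_isInertiaSplitting (k := k) (isSymmetric_reOp B)
    (by simpa only [HasPosSubspace, PosOn, re_inner_reOp_apply] using hB)
    (by simpa only [HasPosSubspace, PosOn, neg_apply, inner_neg_right, Complex.neg_re,
      re_inner_reOp_apply] using hneg)
  have hline : ∀ y : ℝ, y ≠ 0 → ∃ M : Submodule ℂ H, FiniteDimensional ℂ M ∧
      ∀ u : ℂ, u.im = y → HasPosSubspace k (u • B) M := fun y hy =>
    let ⟨_, hc, hcomp⟩ := exists_forall_hasCompressionGE hH hk h0 hw hw0 (hre w hw) hy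
    hsplit.exists_hasPosSubspace_smul hk hc hcomp
  obtain ⟨M₁, hM₁, hpos₁⟩ := hline 1 one_ne_zero
  obtain ⟨M₂, hM₂, hpos₂⟩ := hline (-1) (neg_ne_zero.2 one_ne_zero)
  refine hasZeroCompression_of_forall_hasPosSubspace (M := M₁ ⊔ M₂) (N := Z)
    (hsplit.not_finiteDimensional hH) fun u ⟨x, hxZ, hx⟩ => ?_
  have him : u.im ≠ 0 := fun him => by
    rw [← Complex.re_add_im u, him, Complex.ofReal_zero, zero_mul, add_zero,
      re_inner_real_smul_apply, ← re_inner_reOp_apply, hsplit.neutral x hxZ, mul_zero] at hx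
    exact hx.false
  have habs : 0 < |u.im| := abs_pos.2 him
  refine .of_div habs ?_
  have hdiv : (u / |u.im|).im = u.im / |u.im| := Complex.div_ofReal_im u _
  rcases him.lt_or_gt with hlt | hgt
  · exact (hpos₂ _ (by rw [hdiv, abs_of_neg hlt, div_neg, div_self him])).mono le_sup_right
  · exact (hpos₁ _ (by rw [hdiv, abs_of_pos hgt, div_self him])).mono le_sup_left

theorem hasZeroCompression_of_not_hasPosSubspace (hH : ¬ FiniteDimensional ℂ H) (hk : 1 ≤ k)
    (h0 : 0 ∈ relativeCore (omegaK k B)) (hB : ¬ HasPosSubspace k B ⊤) :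
    HasZeroCompression k B := by
  have hre : ∀ z ∈ omegaK k B, z.re = 0 := fun z => re_eq_zero_of_mem_omegaK hH hk h0 hB
  by_cases h : ∃ w ∈ omegaK k B, w ≠ 0
  · obtain ⟨w, hw, hw0⟩ := h
    exact hasZeroCompression_of_mem_omegaK hH hk h0 hre hB hw hw0
  · push Not at h
    obtain ⟨μ, hμ⟩ := rankKRange_nonempty hH B k
    obtain rfl := h μ (rankKRange_subset_omegaK hH hk B hμ)
    simpa using mem_rankKRange_iff.1 hμ

theorem zero_mem_relativeCore_omegaK_smul (hH : ¬ FiniteDimensional ℂ H) (hk : 1 ≤ k) {v : ℂ}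
    (hv : v ≠ 0) (h0 : 0 ∈ relativeCore (omegaK k B)) :
    0 ∈ relativeCore (omegaK k (v • B)) := by
  refine ⟨by simpa using mul_mem_omegaK_smul hH hk hv h0.1, fun w hw => ?_⟩
  have hw' : v⁻¹ * w ∈ omegaK k B := by
    simpa only [inv_smul_smul₀ hv] using mul_mem_omegaK_smul hH hk (inv_ne_zero hv) hw
  obtain ⟨δ, hδ, hneg⟩ := exists_neg_smul_mem_of_zero_mem_relativeCore h0 hw'
  refine ⟨δ, hδ, ?_⟩
  convert mul_mem_omegaK_smul hH hk hv hneg using 1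
  rw [zero_add, zero_sub, smul_neg, mul_neg, mul_smul_comm, mul_inv_cancel_left₀ hv]

theorem hasZeroCompression_of_zero_mem_relativeCore (hH : ¬ FiniteDimensional ℂ H) (hk : 1 ≤ k)
    (h0 : 0 ∈ relativeCore (omegaK k B)) : HasZeroCompression k B := by
  by_cases h : ∀ u : ℂ, u ≠ 0 → HasPosSubspace k (u • B) ⊤
  · exact hasZeroCompression_of_forall_ne_zero hH hk h
  · push Not at h
    obtain ⟨u, hu, hB⟩ := h
    exact .of_smul hu (hasZeroCompression_of_not_hasPosSubspace hH hk
      (zero_mem_relativeCore_omegaK_smul hH hk hu h0) hB)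

theorem relativeCore_omegaK_subset_rankKRange (hH : ¬ FiniteDimensional ℂ H) (hk : 1 ≤ k)
    (A : H →L[ℂ] H) : relativeCore (omegaK k A) ⊆ rankKRange k A := fun μ hμ => by
  refine mem_rankKRange_iff.2
    (hasZeroCompression_of_zero_mem_relativeCore hH hk ⟨?_, fun w hw => ?_⟩)
  · rw [mem_omegaK_sub_iff hH hk, add_zero]
    exact hμ.1
  · obtain ⟨δ, hδ, hmem⟩ := hμ.2 _ ((mem_omegaK_sub_iff hH hk).1 hw)
    refine ⟨δ, hδ, (mem_omegaK_sub_iff hH hk).2 ?_⟩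
    simpa using hmem

end RelativeCoreOfOmega

/-- For an operator `A` on an infinite-dimensional complex Hilbert space and `k ≥ 1`:
the relative (intrinsic) interior of `Ω_k(A)` is contained in `Λ_k(A)`,
`Λ_k(A) ⊆ Ω_k(A)`, `Ω_k(A)` is the closure of `Λ_k(A)`; in particular `Λ_k(A)` is
nonempty and `Ω_k(A)` is its closure. -/
theorem interior_closure_rankKRange
    (hH : ¬ FiniteDimensional ℂ H) (A : H →L[ℂ] H) (k : ℕ) (hk : 1 ≤ k) :
    intrinsicInterior ℝ (omegaK k A) ⊆ rankKRange k A ∧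
    rankKRange k A ⊆ omegaK k A ∧
    omegaK k A = closure (rankKRange k A) ∧
    (rankKRange k A).Nonempty := by
  have hcore := relativeCore_omegaK_subset_rankKRange hH hk A
  have hsub := rankKRange_subset_omegaK hH hk A
  have hne := rankKRange_nonempty hH A k
  have hconv := convex_omegaK k A
  refine ⟨intrinsicInterior_subset_relativeCore.trans hcore, hsub, ?_, hne⟩
  have hcore_ne : (relativeCore (omegaK k A)).Nonempty :=
    ((hne.mono hsub).intrinsicInterior hconv).mono intrinsicInterior_subset_relativeCore
  exact ((subset_closure_relativeCore hconv hcore_ne).trans (closure_mono hcore)).antisymm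
    (closure_minimal hsub (isClosed_omegaK k A))
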